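/- There exists a function F assigning to every countable set S of ordinals below ω₁ (the least uncountable ordinal) a compact subset F(S) of the Hilbert cube [0,1]^ℕ such that for all countable sets S, T of ordinals below ω₁: S ⊆ T if and only if F(S) is σ-embeddable into F(T). In other words, the inclusion ordering ([ω₁]^{≤ω}, ⊆) order-embeds into the σ-embeddability ordering of compact metrizable spaces. -/

import Mathlib

/-!
The heart of the proof is a transfinite sequence `P α`, `α < ω₁`, of `Gδ` subsets of the Hilbert
cube, none of them a countable union of zero-dimensional sets, such that for `α ≠ β` every space
that embeds into both `P α` and `P β` is zero-dimensional. Each `P α` has a compactification `X α`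
whose remainder consists of sequences vanishing from some index on, and so is a countable union of
zero-dimensional sets. The set `F S` is a union of shrinking copies of the `X α` for `α ∈ S`
together with `0`. If `S ⊆ T`, the copies in `F S` are also found in `F T`. If `α ∈ S \ T`, a
σ-embedding of `F S` into `F T` would cover `X α` by countably many sets each of which embeds into
some `X β` with `β ≠ α` or is a point, so `X α` would be a countable union of zero-dimensional sets.

How embeddings are excluded. Each `P α` is given with a Borel map recovering a point from its first
coordinate, which lies in a Cantor set. A space `W` embedded in `P α` by `f` and in `P β` by `g` is
described by countably many open sets, hence by some `r` in the Cantor space: `r` tells the first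
coordinate of `g w` from `f w`, and `f w` from `g w`. The traps of `P β` consist of the points
having a coordinate equal to a code of such an `r` that reproduces the point itself. If `P α` avoids
these traps, then the coordinates of the points of `f(W)` omit all codes of `r`; these are dense in
the interval, so `W` is zero-dimensional. Every trap is captured by a task: a sequence of continuous
functions `ψ i` with a Borel map that predicts the point from the signs of the `ψ i`.

How a space avoiding countably many tasks is built. A closed set is essential in a set of
directions if partitions between opposite faces in these directions always have a common point in
it; the whole cube is essential in all directions by the Poincaré–Miranda theorem, which is derived
from Sperner's lemma modulo 2. On an essential set, every task has either a zero of some `ψ i` on a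
set still essential in infinitely many directions, or a region of constant signs which is; in the
second case one direction is spent on moving a coordinate away from its predicted value. Further
directions are spent on a coordinate that codes the state of the construction, and on lying on a
partition that misses the `m`-th of countably many given zero-dimensional sets. The given sets are
coded in the initial state, so one and the same space contains for every countable family of
zero-dimensional sets a point outside all of them. It is `Gδ` because the transition between states
can be arranged to have a `Gδ` graph.
-/

open Set

/-- `X` is σ-embeddable into `Y`: `X` is a countable union of subsets each of which
(with the subspace topology) is homeomorphic to a subspace of `Y`. -/
def SigmaEmbeddable (X : Type*) (Y : Type*) [TopologicalSpace X] [TopologicalSpace Y] : Prop :=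
  ∃ A : ℕ → Set X, (⋃ n, A n) = univ ∧ ∀ n, ∃ B : Set Y, Nonempty (↥(A n) ≃ₜ ↥B)

/-- The least uncountable ordinal `ω₁`. -/
noncomputable def omega1 : Ordinal := (Cardinal.aleph 1).ord

/-! ### Sperner's lemma modulo 2 -/

/-- The `i`-th vertex of the simplex of Kuhn's triangulation of `ℝⁿ` that has least corner `z` and
in which the coordinate `c` is raised at step `τ c`. -/
def kuhnVertex {n : ℕ} (z : Fin n → ℕ) (τ : Equiv.Perm (Fin n)) (i : ℕ) : Fin n → ℕ :=
  fun c => z c + if (τ c : ℕ) < i then 1 else 0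

/-- The vertices of the facet of a Kuhn simplex on which the coordinate `τ⁻¹ 0` is constant. -/
def kuhnFacet {m : ℕ} (z : Fin (m + 1) → ℕ) (τ : Equiv.Perm (Fin (m + 1))) (i : Fin (m + 1)) :
    Fin (m + 1) → ℕ :=
  fun c => z c + if τ c ≠ 0 ∧ (τ c : ℕ) ≤ i then 1 else 0

lemma kuhnVertex_mem_Icc {n : ℕ} (z : Fin n → ℕ) (τ : Equiv.Perm (Fin n)) (i : ℕ) :
    kuhnVertex z τ i ∈ Icc z (z + 1) := by
  refine ⟨fun c => ?_, fun c => ?_⟩ <;>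
    simp only [kuhnVertex, Pi.add_apply, Pi.one_apply] <;> split_ifs <;> omega

lemma kuhnVertex_swap_mul {n : ℕ} (z : Fin n → ℕ) (τ : Equiv.Perm (Fin n)) {a b : Fin n} {i : ℕ}
    (hi : (a : ℕ) < i ↔ (b : ℕ) < i) :
    kuhnVertex z (Equiv.swap a b * τ) i = kuhnVertex z τ i := by
  funext c
  refine congrArg (z c + ·) (if_congr ?_ rfl rfl)
  rw [Equiv.Perm.mul_apply, Equiv.swap_apply_def]
  split_ifs with ha hb
  · rw [ha, hi]
  · rw [hb, hi]
  · rfl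

lemma kuhnVertex_succ {m : ℕ} (z : Fin (m + 1) → ℕ) (τ : Equiv.Perm (Fin (m + 1)))
    (i : Fin (m + 1)) :
    kuhnVertex z τ (i + 1) = kuhnFacet (z + Pi.single (τ⁻¹ 0) 1) τ i := by
  funext c
  simp only [kuhnVertex, kuhnFacet, Pi.add_apply]
  by_cases hc : c = τ⁻¹ 0
  · subst hc
    simp
  · have hτ : τ c ≠ 0 := fun h => hc (Equiv.Perm.eq_inv_iff_eq.mpr h)
    rw [Pi.single_eq_of_ne hc]
    simp [hτ]

lemma kuhnVertex_eq_kuhnFacet_finRotate_mul {m : ℕ} (z : Fin (m + 1) → ℕ)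
    (τ : Equiv.Perm (Fin (m + 1))) (i : Fin (m + 1)) :
    kuhnVertex z τ i = kuhnFacet z (finRotate (m + 1) * τ) i := by
  funext c
  refine congrArg (z c + ·) (if_congr ?_ rfl rfl)
  have hi := i.is_lt
  rw [Equiv.Perm.mul_apply]
  by_cases hc : τ c = Fin.last m
  · rw [hc, finRotate_last]
    simp only [Fin.val_last, ne_eq, not_true_eq_false, false_and, iff_false]
    omega
  · have hval : ((finRotate (m + 1) (τ c) : Fin (m + 1)) : ℕ) = τ c + 1 :=
      coe_finRotate_of_ne_last hc
    have hne : finRotate (m + 1) (τ c) ≠ 0 := by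
      intro h
      simp [h] at hval
    rw [hval]
    exact ⟨fun h => ⟨hne, h⟩, fun h => h.2⟩

lemma kuhnFacet_insertNth_apply {m : ℕ} (τ : Equiv.Perm (Fin (m + 1))) (a : ℕ) (y : Fin m → ℕ)
    (i : Fin (m + 1)) : kuhnFacet ((τ⁻¹ 0).insertNth a y) τ i (τ⁻¹ 0) = a := by
  simp [kuhnFacet]

lemma kuhnFacet_decomposeFin {m : ℕ} (e : Equiv.Perm (Fin m)) (a : ℕ) (y : Fin m → ℕ)
    (i : Fin (m + 1)) :
    kuhnFacet (((Equiv.Perm.decomposeFin.symm (0, e))⁻¹ 0).insertNth a y)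
      (Equiv.Perm.decomposeFin.symm (0, e)) i = Fin.cons a (kuhnVertex y e i) := by
  have hinv : (Equiv.Perm.decomposeFin.symm (0, e))⁻¹ 0 = 0 := by
    rw [Equiv.Perm.inv_eq_iff_eq]
    simp
  rw [hinv]
  funext c
  refine Fin.cases ?_ (fun c => ?_) c
  · simp [kuhnFacet]
  · simp [kuhnFacet, kuhnVertex]

lemma det_kuhnFacet_insertNth_eq_zero {R : Type*} [CommRing R] {m N a : ℕ}
    {H : Fin (m + 2) → (Fin (m + 1) → ℕ) → R}
    (hbot : ∀ j x, x j = 0 → H j.succ x = 0) (htop : ∀ j x, x j = N → H j.succ x = H j.castSucc x)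
    {τ : Equiv.Perm (Fin (m + 1))} (ha : a = 0 ∨ a = N ∧ τ⁻¹ 0 ≠ 0) (y : Fin m → ℕ) :
    Matrix.det (Matrix.of fun i j : Fin (m + 1) =>
      H j.succ (kuhnFacet ((τ⁻¹ 0).insertNth a y) τ i)) = 0 := by
  obtain rfl | ⟨rfl, hτ⟩ := ha
  · exact Matrix.det_eq_zero_of_column_eq_zero (τ⁻¹ 0)
      fun i => hbot _ _ (kuhnFacet_insertNth_apply τ 0 y i)
  · obtain ⟨j, hj⟩ := Fin.exists_succ_eq.mpr hτ
    refine Matrix.det_zero_of_column_eq (i := τ⁻¹ 0) (j := j.castSucc)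
      (hj ▸ (Fin.castSucc_lt_succ).ne') fun i => ?_
    simp only [Matrix.of_apply]
    rw [htop _ _ (kuhnFacet_insertNth_apply τ a y i), ← hj, Fin.succ_castSucc]

lemma sum_perm_eq_sum_decomposeFin {M : Type*} [AddCommMonoid M] {m : ℕ}
    (f : Equiv.Perm (Fin (m + 1)) → M)
    (hf : ∀ τ, τ⁻¹ 0 ≠ 0 → f τ = 0) :
    ∑ τ, f τ = ∑ e : Equiv.Perm (Fin m), f (Equiv.Perm.decomposeFin.symm (0, e)) := by
  rw [← Equiv.sum_comp Equiv.Perm.decomposeFin.symm, Fintype.sum_prod_type, Fin.sum_univ_succ,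
    Finset.sum_eq_zero (s := (Finset.univ : Finset (Fin m))), add_zero]
  refine fun p _ => Finset.sum_eq_zero fun e _ => hf _ ?_
  rw [Ne, Equiv.Perm.inv_eq_iff_eq]
  simp [Fin.ext_iff]

section CharTwo

variable {R : Type*} [CommRing R] [CharP R 2]

lemma sum_kuhnVertex_innerFacet {n : ℕ} (Δ : (Fin n → Fin n → ℕ) → R) (z : Fin n → ℕ)
    (k : Fin (n + 1)) (h0 : 0 < (k : ℕ)) (hn : (k : ℕ) < n) :
    ∑ τ : Equiv.Perm (Fin n), Δ (fun i => kuhnVertex z τ (k.succAbove i)) = 0 := by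
  -- The facets opposite to an interior vertex cancel in pairs.
  set a : Fin n := ⟨k - 1, by omega⟩
  set b : Fin n := ⟨k, hn⟩
  have hab : a ≠ b := by
    simp only [a, b, ne_eq, Fin.mk.injEq]
    omega
  refine Finset.sum_involution (fun τ _ => Equiv.swap a b * τ) (fun τ _ => ?_)
    (fun τ _ _ h => hab (Equiv.swap_eq_one_iff.mp (mul_eq_right.mp h)))
    (fun _ _ => Finset.mem_univ _) (fun τ _ => by simp)
  have hfacet : (fun i => kuhnVertex z (Equiv.swap a b * τ) (k.succAbove i)) =
      fun i => kuhnVertex z τ (k.succAbove i) := by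
    funext i
    have hne : (k.succAbove i : ℕ) ≠ k := fun h => Fin.succAbove_ne k i (Fin.ext h)
    exact kuhnVertex_swap_mul z τ (by simp only [a, b]; omega)
  rw [hfacet]
  exact CharTwo.add_self_eq_zero _

lemma sum_kuhnVertex_facets {m : ℕ} (Δ : (Fin (m + 1) → Fin (m + 1) → ℕ) → R)
    (z : Fin (m + 1) → ℕ) :
    ∑ τ : Equiv.Perm (Fin (m + 1)), ∑ k : Fin (m + 2),
      Δ (fun i => kuhnVertex z τ (k.succAbove i)) =
    ∑ τ : Equiv.Perm (Fin (m + 1)),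
      (Δ (kuhnFacet (z + Pi.single (τ⁻¹ 0) 1) τ) + Δ (kuhnFacet z τ)) := by
  rw [Finset.sum_comm, Fin.sum_univ_succ, Fin.sum_univ_castSucc,
    Finset.sum_eq_zero (s := (Finset.univ : Finset (Fin m)))
      (fun k _ => sum_kuhnVertex_innerFacet Δ z _ (by simp) (by simp)),
    zero_add, Finset.sum_add_distrib]
  congr 1
  · refine Finset.sum_congr rfl fun τ _ => congrArg Δ (funext fun i => ?_)
    simp only [Fin.zero_succAbove, Fin.val_succ, kuhnVertex_succ]
  · rw [← Equiv.sum_comp (Equiv.mulLeft (finRotate (m + 1))) (fun τ => Δ (kuhnFacet z τ))]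
    refine Finset.sum_congr rfl fun τ _ => congrArg Δ (funext fun i => ?_)
    simp only [Fin.succ_last, Fin.succAbove_last, Fin.val_castSucc,
      kuhnVertex_eq_kuhnFacet_finRotate_mul, Equiv.coe_mulLeft]

lemma sum_add_single_add_self {m : ℕ} (N : ℕ) (j : Fin (m + 1)) (f : (Fin (m + 1) → ℕ) → R) :
    ∑ z : Fin (m + 1) → Fin N,
      (f ((fun c => (z c : ℕ)) + Pi.single j 1) + f (fun c => (z c : ℕ))) =
    ∑ y : Fin m → Fin N,
      (f (j.insertNth N (fun c => (y c : ℕ))) + f (j.insertNth 0 (fun c => (y c : ℕ)))) := by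
  rw [← Equiv.sum_comp (Fin.insertNthEquiv (fun _ => Fin N) j), Fintype.sum_prod_type,
    Finset.sum_comm]
  refine Finset.sum_congr rfl fun y _ => ?_
  set g : ℕ → R := fun a => f (j.insertNth a (fun c => (y c : ℕ)))
  have hinsert (a : Fin N) :
      (fun c => ((Fin.insertNthEquiv (fun _ => Fin N) j (a, y) c : Fin N) : ℕ)) =
        j.insertNth (a : ℕ) (fun c => (y c : ℕ)) := by
    funext c
    refine Fin.succAboveCases j ?_ (fun i => ?_) c <;> simp
  have hsucc (a : ℕ) : j.insertNth (α := fun _ => ℕ) a (fun c => (y c : ℕ)) + Pi.single j 1 =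
      j.insertNth (a + 1) (fun c => (y c : ℕ)) := by
    funext c
    refine Fin.succAboveCases j ?_ (fun i => ?_) c <;> simp
  calc _ = ∑ a : Fin N, (g (a + 1) - g a) := by simp only [hinsert, hsucc, CharTwo.sub_eq_add, g]
    _ = g N - g 0 := by
      rw [Fin.sum_univ_eq_sum_range (fun a => g (a + 1) - g a), Finset.sum_range_sub]
    _ = _ := CharTwo.sub_eq_add _ _

/-- Stokes' formula for Kuhn's triangulation of a cube. -/
lemma sum_kuhnVertex_boundary {m : ℕ} (N : ℕ) (Δ : (Fin (m + 1) → Fin (m + 1) → ℕ) → R) :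
    ∑ z : Fin (m + 1) → Fin N, ∑ τ : Equiv.Perm (Fin (m + 1)), ∑ k : Fin (m + 2),
      Δ (fun i => kuhnVertex (fun c => z c) τ (k.succAbove i)) =
    ∑ τ : Equiv.Perm (Fin (m + 1)), ∑ y : Fin m → Fin N,
      (Δ (kuhnFacet ((τ⁻¹ 0).insertNth N (fun c => (y c : ℕ))) τ) +
       Δ (kuhnFacet ((τ⁻¹ 0).insertNth 0 (fun c => (y c : ℕ))) τ)) := by
  simp_rw [sum_kuhnVertex_facets]
  rw [Finset.sum_comm]
  exact Finset.sum_congr rfl fun τ _ =>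
    sum_add_single_add_self N (τ⁻¹ 0) (fun z => Δ (kuhnFacet z τ))

/-- Sperner's lemma in determinant form. -/
lemma sum_det_kuhnVertex {n : ℕ} (N : ℕ) (H : Fin (n + 1) → (Fin n → ℕ) → R)
    (hone : ∀ x, H 0 x = 1) (hbot : ∀ j x, x j = 0 → H j.succ x = 0)
    (htop : ∀ j x, x j = N → H j.succ x = H j.castSucc x) :
    ∑ z : Fin n → Fin N, ∑ τ : Equiv.Perm (Fin n),
      Matrix.det (Matrix.of fun i j : Fin (n + 1) => H j (kuhnVertex (fun c => z c) τ i)) = 1 := by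
  -- Expanding along the first column, which consists of ones, turns each determinant into a sum
  -- over facets. On the boundary of the cube only the top face of the coordinate `0` contributes.
  induction n with
  | zero => simp [hone]
  | succ m ih =>
    set Δ : (Fin (m + 1) → Fin (m + 1) → ℕ) → R :=
      fun w => Matrix.det (Matrix.of fun i j : Fin (m + 1) => H j.succ (w i)) with hΔ
    have hexpand (z : Fin (m + 1) → Fin N) (τ : Equiv.Perm (Fin (m + 1))) :
        Matrix.det (Matrix.of fun i j : Fin (m + 2) => H j (kuhnVertex (fun c => z c) τ i)) =
          ∑ k : Fin (m + 2), Δ (fun i => kuhnVertex (fun c => z c) τ (k.succAbove i)) := by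
      rw [Matrix.det_succ_column_zero]
      refine Finset.sum_congr rfl fun k _ => ?_
      simp only [CharTwo.neg_eq, one_pow, one_mul, Matrix.of_apply, hone]
      rfl
    have hvanish {a : ℕ} {τ : Equiv.Perm (Fin (m + 1))} (ha : a = 0 ∨ a = N ∧ τ⁻¹ 0 ≠ 0)
        (y : Fin m → Fin N) : Δ (kuhnFacet ((τ⁻¹ 0).insertNth a (fun c => (y c : ℕ))) τ) = 0 :=
      det_kuhnFacet_insertNth_eq_zero hbot htop ha _
    simp_rw [hexpand, sum_kuhnVertex_boundary, hvanish (Or.inl rfl), add_zero]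
    rw [sum_perm_eq_sum_decomposeFin _
        fun τ hτ => Finset.sum_eq_zero fun y _ => hvanish (Or.inr ⟨rfl, hτ⟩) y, Finset.sum_comm]
    simp_rw [hΔ, kuhnFacet_decomposeFin]
    refine ih (fun j x => H j.succ (Fin.cons N x)) (fun x => ?_) (fun j x hx => ?_)
      fun j x hx => ?_
    · rw [htop 0 _ (by simp), Fin.castSucc_zero, hone]
    · exact hbot j.succ _ (by simpa using hx)
    · rw [htop j.succ _ (by simpa using hx), Fin.succ_castSucc]

end CharTwo

lemma exists_kuhnVertex_ne {n : ℕ} (N : ℕ) (H : Fin (n + 1) → (Fin n → ℕ) → ZMod 2)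
    (hone : ∀ x, H 0 x = 1) (hbot : ∀ j x, x j = 0 → H j.succ x = 0)
    (htop : ∀ j x, x j = N → H j.succ x = H j.castSucc x) :
    ∃ (z : Fin n → ℕ) (τ : Equiv.Perm (Fin n)), (∃ i, H (Fin.last n) (kuhnVertex z τ i) ≠ 0) ∧
      ∀ j : Fin n, ∃ i, H j.succ (kuhnVertex z τ i) ≠ H j.castSucc (kuhnVertex z τ i) := by
  obtain ⟨z, τ, hdet⟩ : ∃ (z : Fin n → Fin N) (τ : Equiv.Perm (Fin n)),
      Matrix.det (Matrix.of fun i j : Fin (n + 1) =>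
        H j (kuhnVertex (fun c => z c) τ i)) ≠ 0 := by
    by_contra! hzero
    simpa [hzero] using sum_det_kuhnVertex N H hone hbot htop
  refine ⟨fun c => z c, τ, ?_, fun j => ?_⟩
  · by_contra! hzero
    exact hdet (Matrix.det_eq_zero_of_column_eq_zero (Fin.last n) fun i => hzero i)
  · by_contra! heq
    exact hdet (Matrix.det_zero_of_column_eq (i := j.succ) (j := j.castSucc)
      (Fin.castSucc_lt_succ).ne' fun i => heq i)

/-- A discrete form of the Poincaré–Miranda theorem. -/
lemma exists_cell_of_opposite_faces {n : ℕ} (N : ℕ) (f : Fin n → (Fin n → ℕ) → Prop)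
    (hbot : ∀ i x, x i = 0 → ¬ f i x) (htop : ∀ i x, x i = N → f i x) :
    ∃ z : Fin n → ℕ, ∀ i, ∃ v ∈ Icc z (z + 1), ∃ w ∈ Icc z (z + 1), f i v ∧ ¬ f i w := by
  classical
  set H : Fin (n + 1) → (Fin n → ℕ) → ZMod 2 := fun j x =>
    if ∀ i : Fin n, (i : ℕ) < j → f i x then 1 else 0
  have hsucc (j : Fin n) (x : Fin n → ℕ) (hx : f j x) : H j.succ x = H j.castSucc x := by
    refine if_congr (forall_congr' fun i => ?_) rfl rfl
    simp only [Fin.val_succ, Nat.lt_succ_iff_lt_or_eq, Fin.val_castSucc, or_imp,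
      and_iff_left_iff_imp]
    exact fun _ hij => Fin.ext hij ▸ hx
  obtain ⟨z, τ, ⟨k, hk⟩, hne⟩ := exists_kuhnVertex_ne N H (fun x => by simp [H])
    (fun j x hx => if_neg fun h => hbot j x hx (h j (by simp)))
    (fun j x hx => hsucc j x (htop j x hx))
  refine ⟨z, fun j => ?_⟩
  obtain ⟨l, hl⟩ := hne j
  refine ⟨_, kuhnVertex_mem_Icc z τ k, _, kuhnVertex_mem_Icc z τ l, ?_, fun h => hl (hsucc j _ h)⟩
  by_contra hj
  exact hk (if_neg fun h => hj (h j (by simp)))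

/-! ### Essential families of faces -/

/-- The cube with coordinates indexed by `ι`. -/
abbrev Cube (ι : Type*) := ι → unitInterval

/-- The zero set of `g` is a partition between the opposite faces of the cube in direction `k`, in
the weak sense that `g` may vanish on these faces. -/
structure FaceSeparator {ι : Type*} (k : ι) (g : Cube ι → ℝ) : Prop where
  continuous : Continuous g
  nonpos : ∀ x, x k = 0 → g x ≤ 0
  nonneg : ∀ x, x k = 1 → 0 ≤ g x

/-- The pairs of opposite faces in the directions of `M` form an essential family on `K`: partitions
between them always have a common point in `K`. -/
def EssentialOn {ι : Type*} (K : Set (Cube ι)) (M : Set ι) : Prop :=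
  ∀ g : ι → Cube ι → ℝ, (∀ k, FaceSeparator k (g k)) → ∃ x ∈ K, ∀ k ∈ M, g k x = 0

/-- The point of the cube whose coordinates are the multiples of `1 / N` given by `x`. -/
noncomputable def gridPoint {n : ℕ} (N : ℕ) (x : Fin n → ℕ) : Cube (Fin n) :=
  fun i => projIcc 0 1 zero_le_one ((x i : ℝ) / N)

lemma gridPoint_of_eq_zero {n : ℕ} (N : ℕ) {x : Fin n → ℕ} {i : Fin n} (hx : x i = 0) :
    gridPoint N x i = 0 := by
  simp only [gridPoint, hx, Nat.cast_zero, zero_div, projIcc_left]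
  rfl

lemma gridPoint_of_eq {n N : ℕ} (hN : N ≠ 0) {x : Fin n → ℕ} {i : Fin n} (hx : x i = N) :
    gridPoint N x i = 1 := by
  simp only [gridPoint, hx, div_self (Nat.cast_ne_zero (R := ℝ).mpr hN), projIcc_right]
  rfl

lemma dist_gridPoint_le {n : ℕ} (N : ℕ) {z x : Fin n → ℕ} (hx : x ∈ Icc z (z + 1)) :
    dist (gridPoint N x) (gridPoint N z) ≤ 1 / N := by
  refine (dist_pi_le_iff (by positivity)).mpr fun i => ?_
  have hlo : (z i : ℝ) ≤ x i := mod_cast hx.1 i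
  have hhi : (x i : ℝ) ≤ z i + 1 := mod_cast hx.2 i
  calc dist (gridPoint N x i) (gridPoint N z i) ≤ |(x i : ℝ) / N - z i / N| := by
        rw [Subtype.dist_eq, Real.dist_eq]
        exact abs_projIcc_sub_projIcc _
    _ = |(x i : ℝ) - z i| / N := by rw [← sub_div, abs_div, Nat.abs_cast]
    _ ≤ 1 / N := by
        gcongr
        rw [abs_le]
        constructor <;> linarith

lemma exists_gridCell_sign_change {n : ℕ} {g : Fin n → Cube (Fin n) → ℝ}
    (hg : ∀ k, FaceSeparator k (g k)) {N : ℕ} (hN : N ≠ 0) :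
    ∃ z : Fin n → ℕ, ∀ i, ∃ v ∈ Icc z (z + 1), ∃ w ∈ Icc z (z + 1),
      0 ≤ g i (gridPoint N v) ∧ g i (gridPoint N w) ≤ 0 := by
  obtain ⟨z, hz⟩ := exists_cell_of_opposite_faces N
    (fun i x => x i ≠ 0 ∧ (x i = N ∨ 0 < g i (gridPoint N x)))
    (fun i x hx h => h.1 hx) (fun i x hx => ⟨hx ▸ hN, Or.inl hx⟩)
  refine ⟨z, fun i => ?_⟩
  obtain ⟨v, hv, w, hw, ⟨-, hfv⟩, hfw⟩ := hz i
  refine ⟨v, hv, w, hw, ?_, ?_⟩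
  · exact hfv.elim (fun h => (hg i).nonneg _ (gridPoint_of_eq hN h)) le_of_lt
  · by_cases hw0 : w i = 0
    · exact (hg i).nonpos _ (gridPoint_of_eq_zero N hw0)
    · exact not_lt.mp fun hpos => hfw ⟨hw0, Or.inr hpos⟩

/-- The Poincaré–Miranda theorem. -/
lemma exists_common_zero_fin {n : ℕ} {g : Fin n → Cube (Fin n) → ℝ}
    (hg : ∀ k, FaceSeparator k (g k)) : ∃ x, ∀ k, g k x = 0 := by
  choose z v hv w hw hpos hneg using fun N : ℕ => exists_gridCell_sign_change hg N.succ_ne_zero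
  obtain ⟨x, φ, hφ, hx⟩ := CompactSpace.tendsto_subseq (fun N => gridPoint (N + 1) (z N))
  have hlim (u : ℕ → Fin n → ℕ) (hu : ∀ N, u N ∈ Icc (z N) (z N + 1)) :
      Filter.Tendsto (fun N => gridPoint (φ N + 1) (u (φ N))) Filter.atTop (nhds x) := by
    refine (tendsto_iff_of_dist (squeeze_zero (fun _ => dist_nonneg) (fun N => ?_)
      (tendsto_one_div_add_atTop_nhds_zero_nat.comp hφ.tendsto_atTop))).mpr hx
    exact_mod_cast dist_gridPoint_le (φ N + 1) (hu (φ N))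
  refine ⟨x, fun k => le_antisymm ?_ ?_⟩
  · exact le_of_tendsto (((hg k).continuous.tendsto x).comp (hlim _ fun N => hw N k))
      (.of_forall fun N => hneg _ k)
  · exact ge_of_tendsto (((hg k).continuous.tendsto x).comp (hlim _ fun N => hv N k))
      (.of_forall fun N => hpos _ k)

section Essential

variable {ι : Type*} {K : Set (Cube ι)} {M : Set ι}

lemma exists_common_zero_finset {g : ι → Cube ι → ℝ} (hg : ∀ k, FaceSeparator k (g k))
    (s : Finset ι) : ∃ x, ∀ k ∈ s, g k x = 0 := by
  set e : Fin s.card → ι := fun i => s.equivFin.symm i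
  have he : Function.Injective e := Subtype.val_injective.comp s.equivFin.symm.injective
  have hcont : Continuous fun y : Cube (Fin s.card) => Function.extend e y 0 := by
    refine continuous_pi fun k => ?_
    by_cases hk : ∃ i, e i = k
    · obtain ⟨i, rfl⟩ := hk
      simpa only [he.extend_apply] using continuous_apply i
    · simpa only [Function.extend_apply' _ _ _ hk] using continuous_const
  obtain ⟨y, hy⟩ := exists_common_zero_fin (g := fun i y => g (e i) (Function.extend e y 0))
    fun i => ⟨(hg (e i)).continuous.comp hcont,
      fun y h => (hg (e i)).nonpos _ (by rwa [he.extend_apply]),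
      fun y h => (hg (e i)).nonneg _ (by rwa [he.extend_apply])⟩
  refine ⟨Function.extend e y 0, fun k hk => ?_⟩
  simpa [e] using hy (s.equivFin ⟨k, hk⟩)

lemma isClosed_commonZeros {g : ι → Cube ι → ℝ} (hg : ∀ k, FaceSeparator k (g k)) (M : Set ι) :
    IsClosed {x | ∀ k ∈ M, g k x = 0} := by
  simp only [ofPred_forall]
  exact isClosed_biInter fun k _ => isClosed_eq (hg k).continuous continuous_const

lemma essentialOn_univ : EssentialOn (univ : Set (Cube ι)) univ := by
  intro g hg
  obtain ⟨x, hx⟩ := IsCompact.nonempty_iInter_of_directed_nonempty_isCompact_isClosed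
    (fun s : Finset ι => {x | ∀ k ∈ s, g k x = 0})
    (directed_of_isDirected_le fun s t hst x hx k hk => hx k (Finset.mem_of_subset hst hk))
    (exists_common_zero_finset hg)
    (fun s => (isClosed_commonZeros hg (s : Set ι)).isCompact)
    (fun s => isClosed_commonZeros hg (s : Set ι))
  exact ⟨x, mem_univ x, fun k _ => mem_iInter.mp hx {k} k (Finset.mem_singleton_self k)⟩

lemma faceSeparator_sub_const (k : ι) (t : unitInterval) :
    FaceSeparator k (fun x => (x k : ℝ) - t) where
  continuous := by fun_prop
  nonpos x hx := by simp [hx, t.2.1]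
  nonneg x hx := by simp [hx, t.2.2]

lemma FaceSeparator.convex_combination {k : ι} {a b : Cube ι → ℝ} (ha : FaceSeparator k a)
    (hb : FaceSeparator k b) {c : Cube ι → ℝ} (hc : Continuous c) (hc01 : ∀ x, c x ∈ Icc 0 1) :
    FaceSeparator k (fun x => (1 - c x) * a x + c x * b x) where
  continuous := ((continuous_const.sub hc).mul ha.continuous).add (hc.mul hb.continuous)
  nonpos x hx := add_nonpos
    (mul_nonpos_of_nonneg_of_nonpos (sub_nonneg.mpr (hc01 x).2) (ha.nonpos x hx))
    (mul_nonpos_of_nonneg_of_nonpos (hc01 x).1 (hb.nonpos x hx))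
  nonneg x hx := add_nonneg (mul_nonneg (sub_nonneg.mpr (hc01 x).2) (ha.nonneg x hx))
    (mul_nonneg (hc01 x).1 (hb.nonneg x hx))

namespace EssentialOn

lemma mono {K' : Set (Cube ι)} {M' : Set ι} (h : EssentialOn K M) (hK : K ⊆ K') (hM : M' ⊆ M) :
    EssentialOn K' M' := fun g hg =>
  let ⟨x, hx, hz⟩ := h g hg
  ⟨x, hK hx, fun k hk => hz k (hM hk)⟩

lemma nonempty (h : EssentialOn K M) : K.Nonempty :=
  let ⟨x, hx, _⟩ := h _ (fun k => faceSeparator_sub_const k 0)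
  ⟨x, hx⟩

lemma iInter {K : ℕ → Set (Cube ι)} (hK : ∀ n, IsClosed (K n)) (hanti : Antitone K)
    (h : ∀ n, EssentialOn (K n) M) : EssentialOn (⋂ n, K n) M := by
  intro g hg
  have hclosed (n : ℕ) : IsClosed (K n ∩ {x | ∀ k ∈ M, g k x = 0}) :=
    (hK n).inter (isClosed_commonZeros hg M)
  obtain ⟨x, hx⟩ := IsCompact.nonempty_iInter_of_sequence_nonempty_isCompact_isClosed
    (fun n => K n ∩ {x | ∀ k ∈ M, g k x = 0})
    (fun n => inter_subset_inter_left _ (hanti n.le_succ))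
    (fun n => h n g hg) (hclosed 0).isCompact hclosed
  rw [mem_iInter] at hx
  exact ⟨x, mem_iInter.mpr fun n => (hx n).1, (hx 0).2⟩

lemma inter_zeros {k : ι} (h : EssentialOn K M) (hk : k ∈ M) {f : Cube ι → ℝ}
    (hf : FaceSeparator k f) : EssentialOn (K ∩ {x | f x = 0}) (M \ {k}) := by
  classical
  intro g hg
  have hupdate : ∀ j, FaceSeparator j (Function.update g k f j) :=
    (Function.forall_update_iff g fun j => FaceSeparator j).mpr ⟨hf, fun j _ => hg j⟩
  obtain ⟨x, hx, hz⟩ := h _ hupdate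
  refine ⟨x, ⟨hx, by simpa using hz k hk⟩, fun j hj => ?_⟩
  simpa [Function.update_of_ne (show j ≠ k from hj.2)] using hz j hj.1

end EssentialOn

lemma isClosed_setOf_essentialOn {A : Type*} [TopologicalSpace A] {R : Set (A × Cube ι)}
    (hR : IsClosed R) (M : Set ι) : IsClosed {a | EssentialOn {x | (a, x) ∈ R} M} := by
  simp only [EssentialOn, ofPred_forall]
  refine isClosed_iInter fun g => isClosed_iInter fun hg => ?_
  convert isClosedMap_fst_of_compactSpace _
    (hR.inter ((isClosed_commonZeros hg M).preimage (continuous_snd (X := A)))) using 1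
  ext a
  simp

/-- The closed side of the zero set of `f` on which `f` is nonnegative for `b = true` and
nonpositive for `b = false`. -/
def closedSide {X : Type*} (f : X → ℝ) (b : Bool) : Set X :=
  if b then {x | 0 ≤ f x} else {x | f x ≤ 0}

/-- The region on which each `ψ i` has the weak sign prescribed by `z i`. -/
def signRegion {X : Type*} (ψ : ℕ → X → ℝ) (z : ℕ → Bool) : Set X :=
  ⋂ i, closedSide (ψ i) (z i)

lemma isClosed_closedSide {X : Type*} [TopologicalSpace X] {f : X → ℝ} (hf : Continuous f)
    (b : Bool) : IsClosed (closedSide f b) := by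
  cases b
  · exact isClosed_le hf continuous_const
  · exact isClosed_le continuous_const hf

lemma EssentialOn.exists_closedSide (hK : IsClosed K) {ψ : Cube ι → ℝ} (hψ : Continuous ψ)
    {E W : Set ι} (hdisj : Disjoint E W) (h : EssentialOn K (E ∪ W))
    (hW : ¬ EssentialOn (K ∩ {x | ψ x = 0}) W) : ∃ b, EssentialOn (K ∩ closedSide ψ b) E := by
  -- Separators for `E` without common zeros on either side of `ψ` can be glued along the common
  -- zero set of the separators for `W`, since it misses `{ψ = 0}`.
  classical
  by_contra! hside
  have hneg := hside false
  have hpos := hside true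
  simp only [EssentialOn] at hW hneg hpos
  push Not at hW hneg hpos
  obtain ⟨g, hg, hgz⟩ := hW
  obtain ⟨a, ha, haz⟩ := hneg
  obtain ⟨b, hb, hbz⟩ := hpos
  set L : Set (Cube ι) := K ∩ {x | ∀ k ∈ W, g k x = 0}
  have hL : IsClosed L := hK.inter (isClosed_commonZeros hg W)
  have hdisjL : Disjoint (L ∩ closedSide ψ false) (L ∩ closedSide ψ true) := by
    rw [Set.disjoint_left]
    rintro x ⟨⟨hxK, hxz⟩, hle⟩ ⟨_, hge⟩
    obtain ⟨k, hk, hne⟩ := hgz x ⟨hxK, le_antisymm hle hge⟩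
    exact hne (hxz k hk)
  obtain ⟨c, hc0, hc1, hc⟩ := exists_continuous_zero_one_of_isClosed
    (hL.inter (isClosed_closedSide hψ false)) (hL.inter (isClosed_closedSide hψ true)) hdisjL
  obtain ⟨x, hx, hz⟩ := h
    (fun k => if k ∈ W then g k else fun x => (1 - c x) * a k x + c x * b k x) fun k => by
      split_ifs
      exacts [hg k, (ha k).convex_combination (hb k) c.continuous hc]
  have hxL : x ∈ L := ⟨hx, fun k hk => by simpa [hk] using hz k (Or.inr hk)⟩
  have hE (k) (hk : k ∈ E) : (1 - c x) * a k x + c x * b k x = 0 := by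
    simpa [Set.disjoint_left.mp hdisj hk] using hz k (Or.inl hk)
  rcases le_total (ψ x) 0 with hs | hs
  · obtain ⟨k, hk, hne⟩ := haz x ⟨hx, hs⟩
    exact hne (by simpa [hc0 ⟨hxL, hs⟩] using hE k hk)
  · obtain ⟨k, hk, hne⟩ := hbz x ⟨hx, hs⟩
    exact hne (by simpa [hc1 ⟨hxL, hs⟩] using hE k hk)

end Essential

lemma exists_forall_of_forall_exists_update {α : Type*} {P : ℕ → (ℕ → α) → Prop}
    (hcongr : ∀ n z z', (∀ i < n, z i = z' i) → P n z → P n z') {z₀ : ℕ → α} (hzero : P 0 z₀)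
    (hsucc : ∀ n z, P n z → ∃ a, P (n + 1) (Function.update z n a)) : ∃ z, ∀ n, P n z := by
  have : Nonempty α := ⟨z₀ 0⟩
  choose! next hnext using hsucc
  set s : ℕ → ℕ → α := fun n =>
    Nat.rec z₀ (fun n z => Function.update z n (next n z)) n
  have hs (n : ℕ) : P n (s n) := by
    induction n with
    | zero => exact hzero
    | succ n ih => exact hnext n _ ih
  have hstable (i n : ℕ) (hin : i + 1 ≤ n) : s n i = s (i + 1) i := by
    induction n, hin using Nat.le_induction with
    | base => rfl
    | succ n hn ih => exact (Function.update_of_ne (by omega) _ _).trans ih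
  exact ⟨fun i => s (i + 1) i, fun n => hcongr n _ _ (fun i hi => hstable i n hi) (hs n)⟩

lemma EssentialOn.exists_signRegion_or_exists_zeros {ι : Type*} {K : Set (Cube ι)}
    (hK : IsClosed K) {ψ : ℕ → Cube ι → ℝ} (hψ : ∀ i, Continuous (ψ i)) {E : Set ι} {W : ℕ → Set ι}
    (hE : ∀ i, Disjoint E (W i)) (hW : Pairwise fun i j => Disjoint (W i) (W j))
    (h : EssentialOn K (E ∪ ⋃ i, W i)) :
    (∃ z, EssentialOn (K ∩ signRegion ψ z) E) ∨
      ∃ i, EssentialOn (K ∩ {x | ψ i x = 0}) (W i) := by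
  by_contra! ⟨hregion, hzeros⟩
  set S : ℕ → (ℕ → Bool) → Set (Cube ι) := fun n z => K ∩ ⋂ i < n, closedSide (ψ i) (z i)
  set M : ℕ → Set ι := fun n => E ∪ ⋃ i ≥ n, W i
  have hS (n : ℕ) (z : ℕ → Bool) : IsClosed (S n z) :=
    hK.inter (isClosed_biInter fun i _ => isClosed_closedSide (hψ i) _)
  have hM (n : ℕ) : M (n + 1) ∪ W n ⊆ M n :=
    union_subset (union_subset_union_right E (biUnion_subset_biUnion_left fun i hi =>
      n.le_succ.trans hi)) (subset_union_of_subset_right (subset_biUnion_of_mem le_rfl) E)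
  have hdisj (n : ℕ) : Disjoint (M (n + 1)) (W n) := by
    refine disjoint_union_left.mpr ⟨hE n, disjoint_iUnion₂_left.mpr fun i hi => hW ?_⟩
    exact (Nat.lt_of_succ_le hi).ne'
  have hstep (n : ℕ) (z : ℕ → Bool) (hz : EssentialOn (S n z) (M n)) :
      ∃ b, EssentialOn (S (n + 1) (Function.update z n b)) (M (n + 1)) := by
    obtain ⟨b, hb⟩ := (hz.mono subset_rfl (hM n)).exists_closedSide (hS n z) (hψ n) (hdisj n)
      fun hn => hzeros n (hn.mono (inter_subset_inter_left _ inter_subset_left) subset_rfl)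
    refine ⟨b, hb.mono ?_ subset_rfl⟩
    rintro x ⟨⟨hx, hxi⟩, hxn⟩
    refine ⟨hx, mem_iInter₂.mpr fun i hi => ?_⟩
    obtain hi | rfl := Nat.lt_succ_iff_lt_or_eq.mp hi
    · rw [Function.update_of_ne hi.ne]
      exact mem_iInter₂.mp hxi i hi
    · rwa [Function.update_self]
  have hcongr (n : ℕ) (z z' : ℕ → Bool) (hzz' : ∀ i < n, z i = z' i) : S n z = S n z' :=
    congrArg (K ∩ ·) (iInter₂_congr fun i hi => by rw [hzz' i hi])
  obtain ⟨z, hz⟩ := exists_forall_of_forall_exists_update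
    (fun n z z' hzz' h => hcongr n z z' hzz' ▸ h) (z₀ := fun _ => true)
    (h.mono (by simp [S]) (by simp [M])) hstep
  have hinter := EssentialOn.iInter (fun n => hS n z)
    (fun m n hmn => inter_subset_inter_right _
      (biInter_subset_biInter_left fun i (hi : i < m) => hi.trans_le hmn))
    (fun n => (hz n).mono subset_rfl subset_union_left)
  refine hregion z (hinter.mono (fun x hx => ?_) subset_rfl)
  rw [mem_iInter] at hx
  exact ⟨(hx 0).1, mem_iInter.mpr fun i => mem_iInter₂.mp (hx (i + 1)).2 i i.lt_succ_self⟩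

/-! ### Zero-dimensional and countable-dimensional spaces -/

/-- A zero-dimensional space: the clopen sets form a basis. The empty space is included. -/
abbrev ZeroDimensional (X : Type*) [TopologicalSpace X] : Prop :=
  HasSmallInductiveDimensionLE X 0

/-- A countable-dimensional space: a countable union of zero-dimensional subspaces. -/
def CountableDimensional (X : Type*) [TopologicalSpace X] : Prop :=
  ∃ 𝒵 : Set (Set X), 𝒵.Countable ∧ (∀ Z ∈ 𝒵, ZeroDimensional Z) ∧ ⋃₀ 𝒵 = univ

section ZeroDimensional

variable {X Y : Type*} [TopologicalSpace X] [TopologicalSpace Y]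

lemma zeroDimensional_iff_exists_isClopen :
    ZeroDimensional X ↔
      ∀ x (U : Set X), IsOpen U → x ∈ U → ∃ C, IsClopen C ∧ x ∈ C ∧ C ⊆ U := by
  refine hasSmallInductiveDimensionLT_one_iff.trans ⟨fun h x U hU hx => ?_, fun h => ?_⟩
  · exact h.exists_subset_of_mem_open hx hU
  · exact TopologicalSpace.isTopologicalBasis_of_isOpen_of_nhds (fun _ hC => hC.isOpen)
      fun x U hx hU => h x U hU hx

lemma ZeroDimensional.of_isInducing (h : ZeroDimensional Y) {f : X → Y}
    (hf : Topology.IsInducing f) : ZeroDimensional X := by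
  rw [zeroDimensional_iff_exists_isClopen] at h ⊢
  intro x U hU hx
  obtain ⟨V, hV, rfl⟩ := hf.isOpen_iff.mp hU
  obtain ⟨C, hC, hxC, hCV⟩ := h (f x) V hV hx
  exact ⟨f ⁻¹' C, hC.preimage hf.continuous, hxC, preimage_mono hCV⟩

lemma ZeroDimensional.mono {A B : Set X} (h : ZeroDimensional B) (hAB : A ⊆ B) :
    ZeroDimensional A :=
  h.of_isInducing (Topology.IsEmbedding.inclusion hAB).isInducing

lemma zeroDimensional_of_subsingleton [Subsingleton X] : ZeroDimensional X :=
  zeroDimensional_iff_exists_isClopen.mpr fun x _ _ hx =>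
    ⟨univ, isClopen_univ, mem_univ x, fun y _ => Subsingleton.elim x y ▸ hx⟩

lemma zeroDimensional_pi {ι : Type*} {X : ι → Type*} [∀ i, TopologicalSpace (X i)]
    (h : ∀ i, ZeroDimensional (X i)) : ZeroDimensional (∀ i, X i) := by
  refine hasSmallInductiveDimensionLT_one_iff.mpr <|
    (isTopologicalBasis_pi fun i =>
      hasSmallInductiveDimensionLT_one_iff.mp (h i)).of_isOpen_of_subset (fun _ hC => hC.isOpen) ?_
  rintro _ ⟨U, F, hU, rfl⟩
  rw [pi_def]
  exact F.finite_toSet.isClopen_biInter fun i hi => (hU i hi).preimage (continuous_apply i)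

lemma zeroDimensional_of_eval_image {ι : Type*} {X : ι → Type*} [∀ i, TopologicalSpace (X i)]
    {A : Set (∀ i, X i)} (h : ∀ i, ZeroDimensional (Function.eval i '' A)) : ZeroDimensional A := by
  have hval : Continuous fun (y : ∀ i, Function.eval i '' A) i => (y i : X i) := by fun_prop
  exact (zeroDimensional_pi h).of_isInducing
    (f := fun x i => ⟨x.1 i, mem_image_of_mem _ x.2⟩)
    (.of_comp (continuous_pi fun i =>
      ((continuous_apply i).comp continuous_subtype_val).subtype_mk _)
      hval Topology.IsInducing.subtypeVal)

lemma zeroDimensional_of_dense_compl {α : Type*} [LinearOrder α] [TopologicalSpace α]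
    [OrderTopology α] [DenselyOrdered α] {A : Set α} (hA : Dense Aᶜ) : ZeroDimensional A := by
  refine zeroDimensional_iff_exists_isClopen.mpr fun x U hU hx => ?_
  have hcut {d : α} (hd : d ∉ A) : IsClopen {y : A | (y : α) < d} := by
    refine ⟨?_, isOpen_lt continuous_subtype_val continuous_const⟩
    convert isClosed_le (continuous_subtype_val (p := (· ∈ A))) (continuous_const (y := d)) using 1
    ext y
    exact ⟨le_of_lt, fun h => lt_of_le_of_ne h fun hyd => hd (hyd ▸ y.2)⟩
  have hbasis : (⨅ (C) (_ : IsClopen C ∧ x ∈ C), Filter.principal C).HasBasis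
      (fun C => IsClopen C ∧ x ∈ C) id :=
    Filter.hasBasis_biInf_principal'
      (fun C hC D hD =>
        ⟨C ∩ D, ⟨hC.1.inter hD.1, hC.2, hD.2⟩, inter_subset_left, inter_subset_right⟩)
      ⟨univ, isClopen_univ, mem_univ x⟩
  have hlim : Filter.Tendsto ((↑) : A → α) (⨅ (C) (_ : IsClopen C ∧ x ∈ C), Filter.principal C)
      (nhds x) := by
    refine tendsto_order.mpr ⟨fun a ha => ?_, fun b hb => ?_⟩
    · obtain ⟨d, hd, had, hdx⟩ := hA.exists_between ha
      exact hbasis.eventually_iff.mpr ⟨_, ⟨(hcut hd).compl, hdx.not_gt⟩,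
        fun y hy => had.trans_le (not_lt.mp hy)⟩
    · obtain ⟨d, hd, hxd, hdb⟩ := hA.exists_between hb
      exact hbasis.eventually_iff.mpr ⟨_, ⟨hcut hd, hxd⟩, fun y hy => lt_trans hy hdb⟩
  obtain ⟨C, ⟨hC, hxC⟩, hCU⟩ := hbasis.mem_iff.mp
    ((nhds_subtype_eq_comap (x := x.1) (h := x.2) ▸ Filter.tendsto_iff_comap.mp hlim)
      (hU.mem_nhds hx))
  exact ⟨C, hC, hxC, hCU⟩

lemma exists_disjoint_open_refinement [LindelofSpace X] [Nonempty X] {U : X → Set X}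
    (hU : ∀ x, IsClopen (U x)) (hxU : ∀ x, x ∈ U x) :
    ∃ W : ℕ → Set X, (∀ n, IsOpen (W n)) ∧ Pairwise (Function.onFun Disjoint W) ∧
      ⋃ n, W n = univ ∧ ∀ n, ∃ x, W n ⊆ U x := by
  obtain ⟨t, ht, htU⟩ := countable_cover_nhds fun x => (hU x).isOpen.mem_nhds (hxU x)
  have htne : t.Nonempty := by
    by_contra! hempty
    rw [hempty, biUnion_empty] at htU
    exact empty_ne_univ htU
  obtain ⟨s, rfl⟩ := ht.exists_eq_range htne
  rw [biUnion_range] at htU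
  refine ⟨disjointed fun n => U (s n), fun n => ?_, disjoint_disjointed _,
    iUnion_disjointed.trans htU, fun n => ⟨s n, disjointed_subset _ n⟩⟩
  rw [disjointed_eq_inter_compl]
  exact (hU _).isOpen.inter ((finite_Iio n).isOpen_biInter fun i _ => (hU (s i)).compl.isOpen)

lemma isClopen_biUnion_of_pairwise_disjoint {κ : Type*} {W : κ → Set X} (hW : ∀ i, IsOpen (W i))
    (hdisj : Pairwise (Function.onFun Disjoint W)) (hcover : ⋃ i, W i = univ) (s : Set κ) :
    IsClopen (⋃ i ∈ s, W i) := by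
  have hcompl : (⋃ i ∈ s, W i)ᶜ = ⋃ i ∈ sᶜ, W i := by
    ext x
    obtain ⟨i, hi⟩ := mem_iUnion.mp (hcover.ge (mem_univ x))
    have hx (t : Set κ) : x ∈ ⋃ j ∈ t, W j ↔ i ∈ t := by
      refine mem_iUnion₂.trans ⟨fun ⟨j, hj, hxj⟩ => ?_, fun h => ⟨i, h, hi⟩⟩
      rwa [← hdisj.eq (Set.not_disjoint_iff.mpr ⟨x, hxj, hi⟩)]
    rw [mem_compl_iff, hx, hx, mem_compl_iff]
  exact ⟨⟨hcompl ▸ isOpen_biUnion fun i _ => hW i⟩, isOpen_biUnion fun i _ => hW i⟩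

lemma ZeroDimensional.exists_isClopen_of_disjoint [LindelofSpace X] (h : ZeroDimensional X)
    {A B : Set X} (hA : IsClosed A) (hB : IsClosed B) (hAB : Disjoint A B) :
    ∃ C : Set X, IsClopen C ∧ A ⊆ C ∧ Disjoint C B := by
  have hmiss (x : X) : ∃ C, IsClopen C ∧ x ∈ C ∧ (Disjoint C A ∨ Disjoint C B) := by
    by_cases hx : x ∈ A
    · obtain ⟨C, hC, hxC, hCB⟩ := zeroDimensional_iff_exists_isClopen.mp h x Bᶜ hB.isOpen_compl
        (Set.disjoint_left.mp hAB hx)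
      exact ⟨C, hC, hxC, Or.inr (subset_compl_iff_disjoint_right.mp hCB)⟩
    · obtain ⟨C, hC, hxC, hCA⟩ := zeroDimensional_iff_exists_isClopen.mp h x Aᶜ hA.isOpen_compl hx
      exact ⟨C, hC, hxC, Or.inl (subset_compl_iff_disjoint_right.mp hCA)⟩
  choose U hU hxU hUAB using hmiss
  obtain hX | hX := isEmpty_or_nonempty X
  · exact ⟨∅, isClopen_empty, fun x => (hX.false x).elim, empty_disjoint B⟩
  obtain ⟨W, hW, hdisj, hcover, hWU⟩ := exists_disjoint_open_refinement hU hxU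
  refine ⟨⋃ n ∈ {n | Disjoint (W n) B}, W n,
    isClopen_biUnion_of_pairwise_disjoint hW hdisj hcover _, fun x hx => ?_,
    disjoint_iUnion₂_left.mpr fun n hn => hn⟩
  obtain ⟨n, hxn⟩ := mem_iUnion.mp (hcover.ge (mem_univ x))
  obtain ⟨y, hy⟩ := hWU n
  refine mem_biUnion ((hUAB y).elim (fun h => ?_) fun h => h.mono_left hy) hxn
  exact (Set.disjoint_left.mp h (hy hxn) hx).elim

lemma exists_continuous_neg_pos [TopologicalSpace.MetrizableSpace X] {A B : Set X}
    (hA : Disjoint (closure A) B) (hB : Disjoint A (closure B)) :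
    ∃ ψ : X → ℝ, Continuous ψ ∧ (∀ x ∈ A, ψ x < 0) ∧ ∀ x ∈ B, 0 < ψ x := by
  let _ := TopologicalSpace.metrizableSpaceMetric X
  obtain rfl | hAne := A.eq_empty_or_nonempty
  · exact ⟨fun _ => 1, continuous_const, by simp, by simp⟩
  obtain rfl | hBne := B.eq_empty_or_nonempty
  · exact ⟨fun _ => -1, continuous_const, by simp, by simp⟩
  refine ⟨fun x => Metric.infDist x A - Metric.infDist x B,
    (Metric.continuous_infDist_pt A).sub (Metric.continuous_infDist_pt B),
    fun x hx => ?_, fun x hx => ?_⟩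
  · simp only [Metric.infDist_zero_of_mem hx, zero_sub, neg_lt_zero]
    exact (Metric.infDist_pos_iff_notMem_closure hBne).mp (Set.disjoint_left.mp hB hx)
  · simp only [Metric.infDist_zero_of_mem hx, sub_zero]
    exact (Metric.infDist_pos_iff_notMem_closure hAne).mp (Set.disjoint_right.mp hA hx)

lemma disjoint_closure_image_coe {Z : Set X} {C D : Set Z} (hC : IsClosed C) (hCD : Disjoint C D) :
    Disjoint (closure ((↑) '' C : Set X)) ((↑) '' D) := by
  rw [Set.disjoint_right]
  rintro _ ⟨x, hx, rfl⟩ hxC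
  exact Set.disjoint_right.mp hCD hx (Topology.IsInducing.subtypeVal.isClosed_iff'.mp hC x hxC)

lemma ZeroDimensional.exists_continuous_ne_zero [TopologicalSpace.MetrizableSpace X]
    [SecondCountableTopology X] {Z A B : Set X} (hZ : ZeroDimensional Z) (hA : IsClosed A)
    (hB : IsClosed B) (hAB : Disjoint A B) :
    ∃ g : X → ℝ, Continuous g ∧ (∀ x ∈ A, g x < 0) ∧ (∀ x ∈ B, 0 < g x) ∧ ∀ x ∈ Z, g x ≠ 0 := by
  obtain ⟨U, hU, hAU, hUB⟩ := normal_exists_closure_subset hA hB.isOpen_compl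
    (subset_compl_iff_disjoint_right.mpr hAB)
  obtain ⟨V, hV, hBV, hVU⟩ := normal_exists_closure_subset hB isClosed_closure.isOpen_compl
    (subset_compl_comm.mp hUB)
  have hUV : Disjoint (closure U) (closure V) := (subset_compl_iff_disjoint_left.mp hVU)
  obtain ⟨C, hC, hUC, hCV⟩ := hZ.exists_isClopen_of_disjoint
    (isClosed_closure.preimage continuous_subtype_val)
    (isClosed_closure.preimage continuous_subtype_val) (hUV.preimage ((↑) : Z → X))
  have hCV' : Disjoint ((↑) '' C : Set X) V := by
    rw [Set.disjoint_left]
    rintro _ ⟨x, hx, rfl⟩ hxV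
    exact Set.disjoint_left.mp hCV hx (subset_closure hxV)
  have hCU' : Disjoint U ((↑) '' Cᶜ : Set X) := by
    rw [Set.disjoint_right]
    rintro _ ⟨x, hx, rfl⟩ hxU
    exact hx (hUC (subset_closure hxU))
  obtain ⟨g, hg, hneg, hpos⟩ := exists_continuous_neg_pos (A := A ∪ (↑) '' C) (B := B ∪ (↑) '' Cᶜ)
    (by
      rw [closure_union, hA.closure_eq, disjoint_union_left, disjoint_union_right,
        disjoint_union_right]
      exact ⟨⟨hAB, hCU'.mono_left hAU⟩, (hCV'.closure_left hV).mono_right hBV,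
        disjoint_closure_image_coe hC.isClosed disjoint_compl_right⟩)
    (by
      rw [closure_union, hB.closure_eq, disjoint_union_right, disjoint_union_left,
        disjoint_union_left]
      exact ⟨⟨hAB, hCV'.mono_right hBV⟩, (hCU'.closure_right hU).mono_left hAU,
        (disjoint_closure_image_coe hC.compl.isClosed disjoint_compl_left).symm⟩)
  refine ⟨g, hg, fun x hx => hneg x (Or.inl hx), fun x hx => hpos x (Or.inl hx), fun x hx => ?_⟩
  by_cases hxC : (⟨x, hx⟩ : Z) ∈ C
  · exact (hneg x (Or.inr ⟨_, hxC, rfl⟩)).ne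
  · exact (hpos x (Or.inr ⟨_, hxC, rfl⟩)).ne'

lemma ZeroDimensional.exists_faceSeparator {ι : Type*} [Countable ι] {Z : Set (Cube ι)}
    (hZ : ZeroDimensional Z) (k : ι) : ∃ g, FaceSeparator k g ∧ ∀ x ∈ Z, g x ≠ 0 := by
  have hface (c : unitInterval) : IsClosed {x : Cube ι | x k = c} :=
    isClosed_eq (continuous_apply k) continuous_const
  have hdisj : Disjoint {x : Cube ι | x k = 0} {x | x k = 1} :=
    Set.disjoint_left.mpr fun x hx₀ hx₁ => zero_ne_one (hx₀.symm.trans hx₁)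
  obtain ⟨g, hg, hneg, hpos, hne⟩ := hZ.exists_continuous_ne_zero (hface 0) (hface 1) hdisj
  exact ⟨g, ⟨hg, fun x hx => (hneg x hx).le, fun x hx => (hpos x hx).le⟩, hne⟩

end ZeroDimensional

section CountableDimensional

variable {X Y : Type*} [TopologicalSpace X] [TopologicalSpace Y]

lemma ZeroDimensional.countableDimensional (h : ZeroDimensional X) : CountableDimensional X :=
  ⟨{univ}, countable_singleton _, by
    rintro _ rfl
    exact h.of_isInducing Topology.IsInducing.subtypeVal, sUnion_singleton univ⟩

lemma CountableDimensional.of_isInducing (h : CountableDimensional Y) {f : X → Y}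
    (hf : Topology.IsInducing f) : CountableDimensional X := by
  obtain ⟨𝒵, h𝒵, hzero, hcover⟩ := h
  refine ⟨preimage f '' 𝒵, h𝒵.image _, ?_, ?_⟩
  · rintro _ ⟨Z, hZ, rfl⟩
    exact (hzero Z hZ).of_isInducing (f := Z.restrictPreimage f)
      (hf.restrictPreimage Z)
  · rw [sUnion_image, ← preimage_iUnion₂, ← sUnion_eq_biUnion, hcover, preimage_univ]

lemma CountableDimensional.mono {A B : Set X} (h : CountableDimensional B) (hAB : A ⊆ B) :
    CountableDimensional A :=
  h.of_isInducing (Topology.IsEmbedding.inclusion hAB).isInducing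

lemma countableDimensional_of_iUnion_eq_univ {ι : Type*} [Countable ι] {A : ι → Set X}
    (hA : ⋃ i, A i = univ) (h : ∀ i, CountableDimensional (A i)) : CountableDimensional X := by
  choose 𝒵 h𝒵 hzero hcover using h
  refine ⟨⋃ i, image (↑) '' 𝒵 i, countable_iUnion fun i => (h𝒵 i).image _, ?_, ?_⟩
  · simp only [mem_iUnion]
    rintro _ ⟨i, Z, hZ, rfl⟩
    exact (hzero i Z hZ).of_isInducing
      (Topology.IsEmbedding.subtypeVal.homeomorphImage Z).symm.isInducing
  · refine eq_univ_of_forall fun x => ?_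
    obtain ⟨i, hi⟩ := mem_iUnion.mp (hA.ge (mem_univ x))
    obtain ⟨Z, hZ, hx⟩ := (hcover i).ge (mem_univ ⟨x, hi⟩)
    exact ⟨_, mem_iUnion.mpr ⟨i, Z, hZ, rfl⟩, _, hx, rfl⟩

lemma countableDimensional_of_subset_iUnion {ι : Type*} [Countable ι] {S : Set X} {A : ι → Set X}
    (hSA : S ⊆ ⋃ i, A i) (h : ∀ i, CountableDimensional (A i)) : CountableDimensional S := by
  refine countableDimensional_of_iUnion_eq_univ (A := fun i => ((↑) ⁻¹' A i : Set S))
    (eq_univ_of_forall fun x => ?_) fun i => ?_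
  · rw [← preimage_iUnion]
    exact hSA x.2
  · exact (h i).of_isInducing (restrictPreimage_isInducing (A i) Topology.IsInducing.subtypeVal)

lemma CountableDimensional.exists_subset_iUnion {S : Set X} (h : CountableDimensional S) :
    ∃ Z : ℕ → Set X, (∀ n, ZeroDimensional (Z n)) ∧ S ⊆ ⋃ n, Z n := by
  obtain ⟨𝒵, h𝒵, hzero, hcover⟩ := h
  obtain ⟨Z, hZ⟩ := (h𝒵.insert ∅).exists_eq_range (insert_nonempty _ _)
  refine ⟨fun n => (↑) '' Z n, fun n => ?_, fun x hx => ?_⟩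
  · have hZn : ZeroDimensional (Z n) := by
      obtain h | h := mem_insert_iff.mp (hZ ▸ mem_range_self n)
      · rw [h]
        exact zeroDimensional_of_subsingleton
      · exact hzero _ h
    exact hZn.of_isInducing
      (Topology.IsEmbedding.subtypeVal.homeomorphImage (Z n)).symm.isInducing
  · obtain ⟨A, hA, hxA⟩ := mem_sUnion.mp (hcover ▸ mem_univ (⟨x, hx⟩ : S))
    obtain ⟨n, rfl⟩ := hZ ▸ mem_insert_of_mem _ hA
    exact mem_iUnion.mpr ⟨n, ⟨x, hx⟩, hxA, rfl⟩

lemma countableDimensional_setOf_eventually_eq_zero :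
    CountableDimensional {x : Cube ℕ | ∀ᶠ i in Filter.atTop, x i = 0} := by
  let D : Set unitInterval := insert 0 (range (TopologicalSpace.denseSeq unitInterval))
  have : Countable D := ((countable_range _).insert 0).to_subtype
  have hD : Dense D := (TopologicalSpace.denseRange_denseSeq unitInterval).mono (subset_insert _ _)
  let T : Option D → Set unitInterval := fun o => o.elim Dᶜ fun d => {d.1}
  have hT (o : Option D) : ZeroDimensional (T o) := by
    cases o with
    | none => exact zeroDimensional_of_dense_compl (by simpa only [T, Option.elim, compl_compl])
    | some d => exact zeroDimensional_of_subsingleton (X := ({d.1} : Set unitInterval))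
  have hcover (t : unitInterval) : ∃ o, t ∈ T o := by
    by_cases ht : t ∈ D
    · exact ⟨some ⟨t, ht⟩, rfl⟩
    · exact ⟨none, ht⟩
  let A : List (Option D) → Set (Cube ℕ) := fun s =>
    univ.pi fun i => T (s.getD i (some ⟨0, mem_insert _ _⟩))
  have hA (s : List (Option D)) : ZeroDimensional (A s) :=
    zeroDimensional_of_eval_image fun i => (hT _).mono (eval_image_univ_pi_subset)
  choose o ho using hcover
  refine countableDimensional_of_subset_iUnion (fun x hx => ?_) fun s => (hA s).countableDimensional
  obtain ⟨N, hN⟩ := Filter.eventually_atTop.mp hx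
  refine mem_iUnion.mpr ⟨(List.range N).map fun i => o (x i), fun i _ => ?_⟩
  obtain hi | hi := lt_or_ge i N
  · simpa [List.getD, hi] using ho (x i)
  · simpa [List.getD, hi, T] using hN i hi

end CountableDimensional

/-! ### Codes -/

/-- The Cantor space of binary sequences. -/
abbrev CantorSpace := ℕ → Bool

/-- The Hilbert cube. -/
abbrev HilbertCube := Cube ℕ

/-- The standard embedding of the Cantor space in the unit interval. -/
noncomputable def cantorCode (s : CantorSpace) : unitInterval :=
  inclusion cantorSet_subset_unitInterval (cantorSetHomeomorphNatToBool.symm s)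

lemma continuous_cantorCode : Continuous cantorCode :=
  (continuous_inclusion _).comp cantorSetHomeomorphNatToBool.symm.continuous

lemma cantorCode_injective : Function.Injective cantorCode :=
  (inclusion_injective _).comp cantorSetHomeomorphNatToBool.symm.injective

lemma isClosedEmbedding_cantorCode : Topology.IsClosedEmbedding cantorCode :=
  continuous_cantorCode.isClosedEmbedding cantorCode_injective

/-- Pairs of (indices of) points of a dense sequence in the unit interval in increasing order. -/
abbrev Gap :=
  {p : ℕ × ℕ // TopologicalSpace.denseSeq unitInterval p.1 <
    TopologicalSpace.denseSeq unitInterval p.2}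

/-- A copy of `cantorCode` squeezed between the two points of a gap, so that the codes of a fixed
sequence in all gaps form a dense set. -/
noncomputable def cantorCodeIn (j : Gap) (s : CantorSpace) : unitInterval :=
  inclusion (Icc_subset_Icc (unitInterval.nonneg _) (unitInterval.le_one _))
    ((iccHomeoI _ _ (Subtype.coe_lt_coe.mpr j.2)).symm (cantorCode s))

lemma cantorCodeIn_mem_Icc (j : Gap) (s : CantorSpace) :
    cantorCodeIn j s ∈ Icc (TopologicalSpace.denseSeq unitInterval j.1.1)
      (TopologicalSpace.denseSeq unitInterval j.1.2) :=
  ((iccHomeoI _ _ (Subtype.coe_lt_coe.mpr j.2)).symm (cantorCode s)).2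

lemma isInducing_cantorCodeIn (j : Gap) : Topology.IsInducing (cantorCodeIn j) :=
  (Topology.IsEmbedding.inclusion _).isInducing.comp
    ((iccHomeoI _ _ _).symm.isInducing.comp isClosedEmbedding_cantorCode.isInducing)

lemma denseRange_cantorCodeIn (s : CantorSpace) : DenseRange fun j => cantorCodeIn j s := by
  have hdense := TopologicalSpace.denseRange_denseSeq unitInterval
  refine dense_of_exists_between fun a b hab => ?_
  obtain ⟨_, ⟨m, rfl⟩, ham, hmb⟩ := hdense.exists_between hab
  obtain ⟨_, ⟨n, rfl⟩, hmn, hnb⟩ := hdense.exists_between hmb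
  have hj := cantorCodeIn_mem_Icc ⟨(m, n), hmn⟩ s
  exact ⟨_, mem_range_self _, ham.trans_le hj.1, hj.2.trans_lt hnb⟩

section OpenCode

open TopologicalSpace

variable {X κ : Type*} [TopologicalSpace X] [SecondCountableTopology X] [Encodable κ]

/-- The open set with index `e` in the family of open sets coded by `r`. -/
def openCode (r : CantorSpace) (e : κ) : Set X :=
  {x | ∃ B : countableBasis X, r (Encodable.encode (e, B)) = true ∧ x ∈ (B : Set X)}

lemma isOpen_setOf_mem_openCode (e : κ) :
    IsOpen {p : CantorSpace × X | p.2 ∈ openCode p.1 e} := by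
  have : {p : CantorSpace × X | p.2 ∈ openCode p.1 e} = ⋃ B : countableBasis X,
      {s : CantorSpace | s (Encodable.encode (e, B)) = true} ×ˢ (B : Set X) := by
    ext
    simp only [openCode, mem_ofPred_eq, mem_iUnion, mem_prod]
  rw [this]
  exact isOpen_iUnion fun B => IsOpen.prod
    ((isOpen_discrete {true}).preimage (continuous_apply (A := fun _ => Bool) _))
    (isOpen_of_mem_countableBasis B.2)

lemma exists_openCode_eq {U : κ → Set X} (hU : ∀ e, IsOpen (U e)) :
    ∃ r : CantorSpace, ∀ e, openCode r e = U e := by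
  classical
  refine ⟨fun n => (Encodable.decode (α := κ × countableBasis X) n).elim false
    fun p => decide ((p.2 : Set X) ⊆ U p.1), fun e => ?_⟩
  ext x
  simp only [openCode, Encodable.encodek, Option.elim, decide_eq_true_eq, mem_ofPred_eq]
  refine ⟨fun ⟨_, hBU, hx⟩ => hBU hx, fun hx => ?_⟩
  obtain ⟨B, hB, hxB, hBU⟩ := (isBasis_countableBasis X).exists_subset_of_mem_open hx (hU e)
  exact ⟨⟨B, hB⟩, hBU, hxB⟩

section CodedMap

variable [MeasurableSpace X] [BorelSpace X]

lemma exists_measurable_forall_apply_mem_basis [T0Space X] [StandardBorelSpace X] [Nonempty X] :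
    ∃ D : (countableBasis X → Prop) → X, Measurable D ∧ ∀ x, D (fun B => x ∈ (B : Set X)) = x := by
  have hmeas : Measurable fun (x : X) (B : countableBasis X) => x ∈ (B : Set X) :=
    measurable_pi_iff.mpr fun B =>
      (isOpen_of_mem_countableBasis B.2).measurableSet.mem
  have hinj : Function.Injective fun (x : X) (B : countableBasis X) => x ∈ (B : Set X) :=
    fun x y hxy => (isBasis_countableBasis X).eq_iff.mpr fun B hB => (congrFun hxy ⟨B, hB⟩).to_iff
  obtain ⟨D, hD, hDx⟩ := (hmeas.measurableEmbedding hinj).exists_measurable_extend measurable_id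
    fun _ => inferInstance
  exact ⟨D, hD, congrFun hDx⟩

variable [T0Space X] [StandardBorelSpace X] [Nonempty X]
  {Y : Type*} [TopologicalSpace Y] [SecondCountableTopology Y]

variable (X) in
/-- Reconstruction of a point from the basic open sets that contain it. -/
noncomputable def pointOfBasis : (countableBasis X → Prop) → X :=
  exists_measurable_forall_apply_mem_basis.choose

/-- The map whose preimages of basic open sets are coded by `r`. -/
noncomputable def codedMap (κ : Type*) [Encodable κ] (r : CantorSpace) (y : Y) : X :=
  pointOfBasis X fun B => y ∈ openCode r (Sum.inl B : countableBasis X ⊕ κ)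

lemma codedMap_eq {r : CantorSpace} {y : Y} {x : X}
    (h : ∀ B, y ∈ openCode r (Sum.inl B : countableBasis X ⊕ κ) ↔ x ∈ (B : Set X)) :
    codedMap κ r y = x := by
  simp only [codedMap, h]
  exact exists_measurable_forall_apply_mem_basis.choose_spec.2 x

lemma measurable_codedMap [MeasurableSpace Y] [BorelSpace Y] :
    Measurable fun p : CantorSpace × Y => (codedMap κ p.1 p.2 : X) :=
  exists_measurable_forall_apply_mem_basis.choose_spec.1.comp <| measurable_pi_iff.mpr fun _ =>
    (isOpen_setOf_mem_openCode _).measurableSet.mem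

end CodedMap

end OpenCode

/-! ### Traps and tasks -/

lemma exists_continuous_sign_eq {X ι : Type*} [TopologicalSpace X]
    [TopologicalSpace.MetrizableSpace X] {A : Set X} {w : A → ι → Bool} (hw : Continuous w) :
    ∃ ψ : ι → X → ℝ, (∀ i, Continuous (ψ i)) ∧
      ∀ (x : A) i, ψ i x ≠ 0 ∧ decide (0 < ψ i x) = w x i := by
  have hclosed (i : ι) (b : Bool) : IsClosed {x | w x i = b} :=
    (isClosed_discrete {b}).preimage ((continuous_apply i).comp hw)
  have hdisj (i : ι) : Disjoint {x | w x i = false} {x | w x i = true} :=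
    Set.disjoint_left.mpr fun x hx hx' => Bool.false_ne_true (hx.symm.trans hx')
  choose ψ hψ hneg hpos using fun i => exists_continuous_neg_pos
    (disjoint_closure_image_coe (hclosed i false) (hdisj i))
    (disjoint_closure_image_coe (hclosed i true) (hdisj i).symm).symm
  refine ⟨ψ, hψ, fun x i => ?_⟩
  cases hx : w x i with
  | false =>
    have hlt := hneg i x ⟨x, hx, rfl⟩
    exact ⟨hlt.ne, decide_eq_false hlt.not_gt⟩
  | true =>
    have hlt := hpos i x ⟨x, hx, rfl⟩
    exact ⟨hlt.ne', decide_eq_true hlt⟩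

/-- A task: to avoid all points that `F` recovers from the signs of the functions `ψ i`. -/
structure AvoidanceTask where
  ψ : ℕ → HilbertCube → ℝ
  F : CantorSpace → HilbertCube
  continuous_ψ (i : ℕ) : Continuous (ψ i)
  measurable_F : Measurable F

/-- The points that a task has to avoid. -/
def AvoidanceTask.captured (t : AvoidanceTask) : Set HilbertCube :=
  {x | (∀ i, t.ψ i x ≠ 0) ∧ t.F (fun i => decide (0 < t.ψ i x)) = x}

lemma AvoidanceTask.exists_subset_captured {A : Set HilbertCube} {r u : A → CantorSpace}
    (hr : Continuous r) (hu : Continuous u) {G : CantorSpace × CantorSpace → HilbertCube}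
    (hG : Measurable G) (hGx : ∀ x, G (r x, u x) = x) : ∃ t : AvoidanceTask, A ⊆ t.captured := by
  let e : CantorSpace × CantorSpace ≃ₜ CantorSpace :=
    Homeomorph.sumArrowHomeomorphProdArrow.symm.trans
      (Homeomorph.piCongrLeft (Y := fun _ => Bool) Equiv.natSumNatEquivNat)
  obtain ⟨ψ, hψ, hsign⟩ := exists_continuous_sign_eq (e.continuous.comp (hr.prodMk hu))
  refine ⟨⟨ψ, G ∘ e.symm, hψ, hG.comp e.symm.continuous.measurable⟩,
    fun x hx => ⟨fun i => (hsign ⟨x, hx⟩ i).1, ?_⟩⟩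
  have hx' : (fun i => decide (0 < ψ i x)) = e (r ⟨x, hx⟩, u ⟨x, hx⟩) :=
    funext fun i => (hsign ⟨x, hx⟩ i).2
  simp only [hx', Function.comp_apply, Homeomorph.symm_apply_apply, hGx]

/-- The indices of the open sets needed to code a partial map: the preimages of the basic open sets
under one map and of the sets `{u | u i = b}` under another. -/
abbrev TrapIndex := TopologicalSpace.countableBasis HilbertCube ⊕ ℕ × Bool

/-- The points whose `k`-th coordinate is a code of a partial embedding that sends the point to
`f u`: the code describes both the map `x ↦ u` and a map that sends `f u` back to `x`. -/
def trap (f : CantorSpace → HilbertCube) (k : ℕ) (j : Gap) : Set HilbertCube :=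
  {x | ∃ r u : CantorSpace, x k = cantorCodeIn j r ∧
    (∀ i b, x ∈ openCode r (Sum.inr (i, b) : TrapIndex) ↔ u i = b) ∧
    codedMap (ℕ × Bool) r (f u) = x}

lemma exists_trap_subset_captured {f : CantorSpace → HilbertCube} (hf : Measurable f) (k : ℕ)
    (j : Gap) : ∃ t : AvoidanceTask, trap f k j ⊆ t.captured := by
  choose r u hr hu hmap using fun x : trap f k j => x.2
  have hr_cont : Continuous r := by
    rw [(isInducing_cantorCodeIn j).continuous_iff]
    exact ((continuous_apply k).comp continuous_subtype_val).congr hr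
  have hu_cont : Continuous u := by
    refine continuous_pi fun i => continuous_discrete_rng.mpr fun b => ?_
    have hopen := (isOpen_setOf_mem_openCode (Sum.inr (i, b) : TrapIndex)).preimage
      (hr_cont.prodMk continuous_subtype_val)
    convert hopen using 1
    ext x
    exact (hu x i b).symm
  exact AvoidanceTask.exists_subset_captured hr_cont hu_cont
    (G := fun p => codedMap (ℕ × Bool) p.1 (f p.2))
    (measurable_codedMap.comp (measurable_fst.prodMk (hf.comp measurable_snd))) hmap

/-! ### Functions with `Gδ` graph and measurable selections -/

section GδGraph

variable {X : Type*} [TopologicalSpace X]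

lemma isGδ_graph_join {Y : ℕ → X → CantorSpace}
    (hY : ∀ i, IsGδ {p : X × CantorSpace | p.2 = Y i p.1}) :
    IsGδ {p : X × CantorSpace | p.2 = fun k => Y k.unpair.1 p.1 k.unpair.2} := by
  have hgraph : {p : X × CantorSpace | p.2 = fun k => Y k.unpair.1 p.1 k.unpair.2} =
      ⋂ i, (fun p : X × CantorSpace => (p.1, fun j => p.2 (Nat.pair i j))) ⁻¹'
        {p | p.2 = Y i p.1} := by
    ext ⟨s, y⟩
    simp only [mem_ofPred_eq, mem_iInter, mem_preimage]
    refine ⟨fun h i => funext fun j => ?_, fun h => funext fun k => ?_⟩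
    · simp only [h, Nat.unpair_pair]
    · simpa only [Nat.pair_unpair] using congrFun (h k.unpair.1) k.unpair.2
  rw [hgraph]
  exact .iInter fun i => (hY i).preimage (by fun_prop)

lemma isGδ_image_of_isClosedEmbedding {Y : Type*} [TopologicalSpace Y]
    [TopologicalSpace.PseudoMetrizableSpace Y] {f : X → Y} (hf : Topology.IsClosedEmbedding f)
    {A : Set X} (hA : IsGδ A) : IsGδ (f '' A) := by
  obtain ⟨T, hT, hc, rfl⟩ := hA
  have himage : f '' ⋂₀ T = range f ∩ ⋂ t ∈ T, (f '' tᶜ)ᶜ := by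
    ext y
    constructor
    · rintro ⟨x, hx, rfl⟩
      refine ⟨mem_range_self x, mem_iInter₂.mpr fun t ht hxt => ?_⟩
      exact hf.injective.mem_set_image.mp hxt (hx t ht)
    · rintro ⟨⟨x, rfl⟩, hx⟩
      refine mem_image_of_mem f fun t ht => ?_
      by_contra hxt
      exact mem_iInter₂.mp hx t ht (mem_image_of_mem f hxt)
  rw [himage]
  exact hf.isClosed_range.isGδ.inter (.biInter hc fun t ht =>
    (hf.isClosedMap _ (hT t ht).isClosed_compl).isOpen_compl.isGδ)

/-- The binary sequence `y` with the bit `b` prepended. -/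
def prependBit (b : Bool) (y : CantorSpace) : CantorSpace
  | 0 => b
  | n + 1 => y n

lemma eq_prependBit_iff {b : Bool} {x y : CantorSpace} :
    x = prependBit b y ↔ x 0 = b ∧ (fun n => x (n + 1)) = y := by
  refine ⟨?_, fun ⟨h₀, h⟩ => funext fun n => ?_⟩
  · rintro rfl
    exact ⟨rfl, rfl⟩
  · cases n with
    | zero => exact h₀
    | succ n => exact congrFun h n

variable [TopologicalSpace.MetrizableSpace X]

lemma isGδ_graph_prependBit {Y : X → CantorSpace} (hY : IsGδ {p : X × CantorSpace | p.2 = Y p.1})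
    {O : Set (X × CantorSpace)} [DecidablePred (· ∈ O)] (hO : IsOpen O) :
    IsGδ {p : X × CantorSpace | p.2 = prependBit (decide ((p.1, Y p.1) ∈ O)) (Y p.1)} := by
  let _ := TopologicalSpace.metrizableSpaceMetric X
  let tail : X × CantorSpace → X × CantorSpace := fun p => (p.1, fun n => p.2 (n + 1))
  have htail : Continuous tail := by fun_prop
  have hhead (b : Bool) : IsClopen {p : X × CantorSpace | p.2 0 = b} :=
    (isClopen_discrete {b}).preimage (f := fun p : X × CantorSpace => p.2 0) (by fun_prop)
  have hgraph : {p : X × CantorSpace | p.2 = prependBit (decide ((p.1, Y p.1) ∈ O)) (Y p.1)} =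
      ({p | p.2 0 = true} ∩ tail ⁻¹' O ∪ {p | p.2 0 = false} ∩ tail ⁻¹' Oᶜ) ∩
        tail ⁻¹' {p | p.2 = Y p.1} := by
    ext ⟨s, y⟩
    refine eq_prependBit_iff.trans (and_congr_left fun hy => ?_)
    have hmem : tail (s, y) = (s, Y s) := congrArg (Prod.mk s) hy
    simp only [mem_union, mem_inter_iff, mem_ofPred_eq, mem_preimage, mem_compl_iff, hmem]
    by_cases h : (s, Y s) ∈ O <;> simp [h]
  rw [hgraph]
  exact .inter (.union ((hhead true).isOpen.inter (hO.preimage htail)).isGδ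
    ((hhead false).isClosed.inter (hO.isClosed_compl.preimage htail)).isGδ) (hY.preimage htail)

variable [MeasurableSpace X] [BorelSpace X]

lemma exists_isGδ_graph_bit {B : Set X} (hB : MeasurableSet B) :
    ∃ Y : X → CantorSpace, IsGδ {p : X × CantorSpace | p.2 = Y p.1} ∧
      ∀ s, Y s 0 = true ↔ s ∈ B := by
  classical
  have hbit (n : ℕ) (b : Bool) : IsOpen {p : X × CantorSpace | p.2 n = b} :=
    (isOpen_discrete {b}).preimage (f := fun p : X × CantorSpace => p.2 n) (by fun_prop)
  induction B, hB using MeasurableSet.induction_on_open with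
  | isOpen U hU =>
    let _ := TopologicalSpace.metrizableSpaceMetric X
    have hconst : IsGδ {p : X × CantorSpace | p.2 = fun _ => false} :=
      (isClosed_eq continuous_snd continuous_const).isGδ
    exact ⟨fun s => prependBit (decide (s ∈ U)) fun _ => false,
      isGδ_graph_prependBit (Y := fun _ _ => false) hconst (hU.preimage continuous_fst),
      fun s => decide_eq_true_iff⟩
  | compl B _ ih =>
    obtain ⟨Y, hY, hYB⟩ := ih
    let O : Set (X × CantorSpace) := {p | p.2 0 = false}
    refine ⟨fun s => prependBit (decide ((s, Y s) ∈ O)) (Y s),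
      isGδ_graph_prependBit hY (hbit 0 false), fun s => decide_eq_true_iff.trans ?_⟩
    rw [mem_compl_iff, ← hYB s, Bool.not_eq_true, mem_ofPred_eq]
  | iUnion B _ _ ih =>
    choose Y hY hYB using ih
    let Z : X → CantorSpace := fun s k => Y k.unpair.1 s k.unpair.2
    let O : Set (X × CantorSpace) := ⋃ i, {p | p.2 (Nat.pair i 0) = true}
    refine ⟨fun s => prependBit (decide ((s, Z s) ∈ O)) (Z s),
      isGδ_graph_prependBit (isGδ_graph_join hY) (isOpen_iUnion fun i => hbit _ true),
      fun s => decide_eq_true_iff.trans ?_⟩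
    simp only [O, Z, mem_iUnion, mem_ofPred_eq, Nat.unpair_pair, hYB]

/-- The binary sequence indexed by `κ` that is stored in an element of the Cantor space; the
remaining bits are free to witness that a graph is a `Gδ` set. -/
def storedBits {κ : Type*} [Encodable κ] (y : CantorSpace) (k : κ) : Bool :=
  y (Nat.pair (Encodable.encode k) 0)

lemma exists_isGδ_graph_storedBits_eq {κ : Type*} [Encodable κ] {G : X → κ → Bool}
    (hG : Measurable G) : ∃ Y : X → CantorSpace, IsGδ {p : X × CantorSpace | p.2 = Y p.1} ∧
      ∀ s, storedBits (Y s) = G s := by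
  have hbit (i : ℕ) : MeasurableSet
      {s | (Encodable.decode (α := κ) i).elim false (G s) = true} := by
    cases Encodable.decode (α := κ) i with
    | none => exact .const (false = true)
    | some k => exact (measurable_pi_apply k).comp hG (measurableSet_singleton true)
  choose Y hY hYG using fun i => exists_isGδ_graph_bit (hbit i)
  refine ⟨fun s k => Y k.unpair.1 s k.unpair.2, isGδ_graph_join hY, fun s =>
    funext fun k => Bool.eq_iff_iff.mpr ?_⟩
  simp only [storedBits, Nat.unpair_pair, hYG, Encodable.encodek, Option.elim, mem_ofPred_eq]

end GδGraph

section Selection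

variable {S : Type*} [TopologicalSpace S] [MeasurableSpace S] [BorelSpace S]

lemma measurable_sInf_section {R : Set (S × unitInterval)} (hR : IsClosed R) :
    Measurable fun s => sInf {t | (s, t) ∈ R} := by
  refine measurable_of_Iic fun a => ?_
  obtain rfl | ha := eq_or_ne a ⊤
  · simp only [Iic_top, preimage_univ, MeasurableSet.univ]
  have himage : (fun s => sInf {t | (s, t) ∈ R}) ⁻¹' Iic a =
      Prod.fst '' (R ∩ {p | p.2 ≤ a}) := by
    ext s
    refine ⟨fun hs => ⟨(s, sInf {t | (s, t) ∈ R}), ⟨?_, hs⟩, rfl⟩, ?_⟩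
    · refine IsClosed.sInf_mem ?_ (hR.preimage (Continuous.prodMk_right s))
      refine nonempty_iff_ne_empty.mpr fun hempty => ha (top_le_iff.mp ?_)
      rw [← sInf_empty, ← hempty]
      exact hs
    · rintro ⟨⟨s, t⟩, ⟨ht, hta⟩, rfl⟩
      exact sInf_le_of_le (b := t) ht hta
  rw [himage]
  exact (isClosedMap_fst_of_compactSpace _
    (hR.inter (isClosed_le continuous_snd continuous_const))).measurableSet

lemma exists_measurable_selection {R : Set (S × CantorSpace)} (hR : IsClosed R) :
    ∃ z : S → CantorSpace, Measurable z ∧ ∀ s t, (s, t) ∈ R → (s, z s) ∈ R := by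
  let code : S × CantorSpace → S × unitInterval := Prod.map id cantorCode
  have hcode : Topology.IsClosedEmbedding code :=
    Topology.IsClosedEmbedding.id.prodMap isClosedEmbedding_cantorCode
  have hR' : IsClosed (code '' R) := hcode.isClosedMap R hR
  obtain ⟨D, hD, hDcode⟩ :=
    isClosedEmbedding_cantorCode.measurableEmbedding.exists_measurable_extend measurable_id
      fun _ => inferInstance
  refine ⟨_, hD.comp (measurable_sInf_section hR'), fun s t hst => ?_⟩
  have hmem : (s, sInf {t | (s, t) ∈ code '' R}) ∈ code '' R :=
    IsClosed.sInf_mem (s := {t | (s, t) ∈ code '' R}) ⟨_, (s, t), hst, rfl⟩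
      (hR'.preimage (Continuous.prodMk_right s))
  obtain ⟨⟨s', z⟩, hz, heq⟩ := hmem
  obtain ⟨rfl, hzs⟩ := Prod.ext_iff.mp heq
  have hDz : D (sInf {t | (s', t) ∈ code '' R}) = z :=
    (congrArg D hzs).symm.trans (congrFun hDcode z)
  exact hDz ▸ hz

end Selection

/-! ### The space attached to a sequence of avoidance tasks -/

section Directions

/-- The directions still free after the branches recorded in the list (latest branch first).
Position `0` carries a code of the state, position `1` serves to avoid a zero-dimensional set, and
the positions `pair a i + 2` are reserved for the branch `a`, the first of them for a cue. -/
def freeDir : List ℕ → ℕ → ℕ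
  | [] => id
  | a :: l => fun i => freeDir l (Nat.pair a (i + 1) + 2)

/-- The directions left to the branches at a node. -/
def restDirs (l : List ℕ) : Set ℕ := range fun i => freeDir l (i + 2)

/-- The directions reserved for the branch `a`. -/
def branchDirs (l : List ℕ) (a : ℕ) : Set ℕ := range fun i => freeDir l (Nat.pair a i + 2)

/-- The direction carrying the cue for the branch `a`. -/
def cueDir (l : List ℕ) (a : ℕ) : ℕ := freeDir l (Nat.pair a 0 + 2)

lemma freeDir_injective (l : List ℕ) : Function.Injective (freeDir l) := by
  induction l with
  | nil => exact Function.injective_id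
  | cons a l ih =>
    refine ih.comp fun i j hij => ?_
    exact Nat.succ_injective (Nat.pair_eq_pair.mp (Nat.add_right_cancel hij)).2

lemma restDirs_subset (l : List ℕ) :
    restDirs l ⊆ (range (freeDir l) \ {freeDir l 0}) \ {freeDir l 1} := by
  rintro _ ⟨i, rfl⟩
  refine ⟨⟨mem_range_self _, fun h => ?_⟩, fun h => ?_⟩ <;>
  · have := freeDir_injective l h
    omega

lemma branchDirs_subset_restDirs (l : List ℕ) (a : ℕ) : branchDirs l a ⊆ restDirs l := by
  rintro _ ⟨i, rfl⟩
  exact mem_range_self _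

lemma pairwise_disjoint_branchDirs (l : List ℕ) :
    Pairwise fun a b => Disjoint (branchDirs l a) (branchDirs l b) := by
  intro a b hab
  rw [Set.disjoint_left]
  rintro _ ⟨i, rfl⟩ ⟨j, hij⟩
  exact hab (Nat.pair_eq_pair.mp (Nat.add_right_cancel (freeDir_injective l hij))).1.symm

lemma range_freeDir_cons_subset (l : List ℕ) (a : ℕ) :
    range (freeDir (a :: l)) ⊆ branchDirs l a \ {cueDir l a} := by
  rintro _ ⟨i, rfl⟩
  refine ⟨mem_range_self _, fun h => ?_⟩
  exact i.succ_ne_zero (Nat.pair_eq_pair.mp (Nat.add_right_cancel (freeDir_injective l h))).2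

end Directions

section States

/-- The indices of the bits stored in a state: those of the previous state, those of a sign
sequence, and that of a cue. -/
abbrev StateIndex := ℕ ⊕ ℕ ⊕ Unit

/-- The previous state stored in a state. -/
def prevState (s : CantorSpace) : CantorSpace := fun j => storedBits s (Sum.inl j : StateIndex)

/-- The sign sequence stored in a state. -/
def signState (s : CantorSpace) : CantorSpace :=
  fun j => storedBits s (Sum.inr (Sum.inl j) : StateIndex)

/-- The cue stored in a state. -/
def cueState (s : CantorSpace) : Bool := storedBits s (Sum.inr (Sum.inr ()) : StateIndex)

@[fun_prop]
lemma continuous_prevState : Continuous prevState := continuous_pi fun _ => continuous_apply _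

@[fun_prop]
lemma continuous_signState : Continuous signState := continuous_pi fun _ => continuous_apply _

@[fun_prop]
lemma continuous_cueState : Continuous cueState := continuous_apply _

/-- The position on the cue direction that shows the cue `b`: one of `1 / 3` and `2 / 3`. -/
noncomputable def cueVal (b : Bool) : unitInterval :=
  if b then ⟨1 / 3, by norm_num, by norm_num⟩ else ⟨2 / 3, by norm_num, by norm_num⟩

lemma cueVal_decide_ne (t : unitInterval) : cueVal (decide ((1 / 2 : ℝ) ≤ t)) ≠ t := by
  intro h
  have ht : ((cueVal (decide ((1 / 2 : ℝ) ≤ t)) : unitInterval) : ℝ) = t := congrArg _ h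
  by_cases hhalf : (1 / 2 : ℝ) ≤ t
  · rw [decide_eq_true hhalf] at ht
    norm_num [cueVal] at ht
    linarith
  · rw [decide_eq_false hhalf] at ht
    norm_num [cueVal] at ht
    linarith

/-- The conditions imposed at a node: the position `0` carries the code of the state, and the point
lies on the partition in the direction at position `1` that is recorded in the initial state. -/
def nodeCond (l : List ℕ) : Set (CantorSpace × HilbertCube) :=
  {p | p.2 (freeDir l 0) = cantorCode p.1 ∧
    p.2 ∉ openCode (prevState^[l.length] p.1) (l.length, freeDir l 1)}

lemma isClosed_nodeCond (l : List ℕ) : IsClosed (nodeCond l) := by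
  have hinit : Continuous fun p : CantorSpace × HilbertCube => (prevState^[l.length] p.1, p.2) :=
    ((continuous_prevState.iterate _).comp continuous_fst).prodMk continuous_snd
  exact (isClosed_eq (by fun_prop) (continuous_cantorCode.comp continuous_fst)).inter
    ((isOpen_setOf_mem_openCode _).preimage hinit).isClosed_compl

end States

namespace AvoidanceTask

/-- The possible outcomes of a task: `0` prescribes the signs of all functions, and `i + 1` makes
the `i`-th function vanish. -/
def outcome (t : AvoidanceTask) : ℕ → CantorSpace → Set HilbertCube
  | 0, z => signRegion t.ψ z
  | i + 1, _ => {x | t.ψ i x = 0}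

lemma isClosed_setOf_mem_outcome (t : AvoidanceTask) (a : ℕ) :
    IsClosed {p : CantorSpace × HilbertCube | p.2 ∈ t.outcome a p.1} := by
  cases a with
  | zero =>
    have hside (i : ℕ) : {p : CantorSpace × HilbertCube | p.2 ∈ closedSide (t.ψ i) (p.1 i)} =
        ⋃ b, {z : CantorSpace | z i = b} ×ˢ closedSide (t.ψ i) b := by
      ext p
      simp only [mem_ofPred_eq, mem_iUnion, mem_prod, exists_eq_left']
    simp only [outcome, signRegion, mem_iInter, ofPred_forall, hside]
    exact isClosed_iInter fun i => isClosed_iUnion_of_finite fun b =>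
      ((isClosed_discrete {b}).preimage (continuous_apply (A := fun _ => Bool) i)).prod
        (isClosed_closedSide (t.continuous_ψ i) b)
  | succ i => exact isClosed_eq ((t.continuous_ψ i).comp continuous_snd) continuous_const

lemma notMem_captured_of_mem_outcome {t : AvoidanceTask} {a d : ℕ} {z : CantorSpace}
    {x : HilbertCube} (hx : x ∈ t.outcome a z) (hd : x d ≠ t.F z d) : x ∉ t.captured := by
  rintro ⟨hne, hF⟩
  cases a with
  | succ i => exact hne i hx
  | zero =>
    have hsign : (fun i => decide (0 < t.ψ i x)) = z := by
      funext i
      have hi : x ∈ closedSide (t.ψ i) (z i) := mem_iInter.mp hx i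
      cases hz : z i with
      | false => exact decide_eq_false (not_lt.mpr (by simpa [hz, closedSide] using hi))
      | true =>
        have hle : 0 ≤ t.ψ i x := by simpa [hz, closedSide] using hi
        exact decide_eq_true (hle.lt_of_ne (hne i).symm)
    exact hd (congrFun (hsign ▸ hF) d).symm

/-- A task whose outcome determines the `j`-th coordinate. -/
noncomputable def coordinate (j : ℕ) : AvoidanceTask where
  ψ i x := x j - TopologicalSpace.denseSeq unitInterval i
  F _ := 0
  continuous_ψ i := by fun_prop
  measurable_F := measurable_const

lemma apply_le_of_mem_outcome_coordinate {j a : ℕ} {z : CantorSpace} {x y : HilbertCube}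
    (hx : x ∈ (coordinate j).outcome a z) (hy : y ∈ (coordinate j).outcome a z) : y j ≤ x j := by
  cases a with
  | succ i =>
    have hxi : (x j : ℝ) = TopologicalSpace.denseSeq unitInterval i := sub_eq_zero.mp hx
    have hyi : (y j : ℝ) = TopologicalSpace.denseSeq unitInterval i := sub_eq_zero.mp hy
    exact (Subtype.ext (hyi.trans hxi.symm)).le
  | zero =>
    by_contra! hlt
    obtain ⟨_, ⟨i, rfl⟩, hxi, hiy⟩ :=
      (TopologicalSpace.denseRange_denseSeq unitInterval).exists_between hlt
    have hxs : x ∈ closedSide ((coordinate j).ψ i) (z i) := mem_iInter.mp hx i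
    have hys : y ∈ closedSide ((coordinate j).ψ i) (z i) := mem_iInter.mp hy i
    cases hz : z i with
    | false =>
      rw [hz] at hys
      exact (sub_pos.mpr (Subtype.coe_lt_coe.mpr hiy)).not_ge hys
    | true =>
      rw [hz] at hxs
      exact (sub_neg.mpr (Subtype.coe_lt_coe.mpr hxi)).not_ge hxs

lemma apply_eq_of_mem_outcome_coordinate {j a : ℕ} {z : CantorSpace} {x y : HilbertCube}
    (hx : x ∈ (coordinate j).outcome a z) (hy : y ∈ (coordinate j).outcome a z) : x j = y j :=
  le_antisymm (apply_le_of_mem_outcome_coordinate hy hx)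
    (apply_le_of_mem_outcome_coordinate hx hy)

end AvoidanceTask

/-- A sequence of avoidance tasks. The `m`-th task is dealt with at the nodes of length `m`. -/
abbrev TaskSequence := ℕ → AvoidanceTask

namespace TaskSequence

variable (τ : TaskSequence)

section Definitions

/-- The closed relation between states and points on arrival at a node, before the conditions of
the node itself are imposed. -/
def arrival : List ℕ → Set (CantorSpace × HilbertCube)
  | [] => univ
  | a :: l => {p | (prevState p.1, p.2) ∈ arrival l ∩ nodeCond l ∧
      p.2 ∈ (τ l.length).outcome a (signState p.1) ∧ p.2 (cueDir l a) = cueVal (cueState p.1)}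

/-- The points related to the state `s` at a node. -/
def slice (l : List ℕ) (s : CantorSpace) : Set HilbertCube :=
  {x | (s, x) ∈ τ.arrival l ∩ nodeCond l}

lemma isClosed_arrival (l : List ℕ) : IsClosed (τ.arrival l) := by
  induction l with
  | nil => exact isClosed_univ
  | cons a l ih =>
    refine ((ih.inter (isClosed_nodeCond l)).preimage
      ((continuous_prevState.comp continuous_fst).prodMk continuous_snd)).inter
      ((((τ l.length).isClosed_setOf_mem_outcome a).preimage
        ((continuous_signState.comp continuous_fst).prodMk continuous_snd)).inter
      (isClosed_eq (by fun_prop) ?_))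
    exact (continuous_of_discreteTopology (f := cueVal)).comp
      (continuous_cueState.comp continuous_fst)

lemma isClosed_setOf_mem_slice (l : List ℕ) :
    IsClosed {p : CantorSpace × HilbertCube | p.2 ∈ τ.slice l p.1} :=
  (τ.isClosed_arrival l).inter (isClosed_nodeCond l)

lemma isClosed_slice (l : List ℕ) (s : CantorSpace) : IsClosed (τ.slice l s) :=
  (τ.isClosed_setOf_mem_slice l).preimage (Continuous.prodMk_right s)

variable {τ} in
lemma apply_freeDir_zero_of_mem_slice {l : List ℕ} {s : CantorSpace} {x : HilbertCube}
    (hx : x ∈ τ.slice l s) : x (freeDir l 0) = cantorCode s :=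
  hx.2.1

/-- The sign sequences for which the branch `a` may be taken at a given state. -/
def branchRel (l : List ℕ) (a : ℕ) : Set (CantorSpace × CantorSpace) :=
  {p | EssentialOn (τ.slice l p.1 ∩ (τ l.length).outcome a p.2) (branchDirs l a)}

lemma isClosed_branchRel (l : List ℕ) (a : ℕ) : IsClosed (τ.branchRel l a) := by
  have hR : IsClosed {q : (CantorSpace × CantorSpace) × HilbertCube |
      q.2 ∈ τ.slice l q.1.1 ∩ (τ l.length).outcome a q.1.2} :=
    ((τ.isClosed_setOf_mem_slice l).preimage
      ((continuous_fst.comp continuous_fst).prodMk continuous_snd)).inter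
    (((τ l.length).isClosed_setOf_mem_outcome a).preimage
      ((continuous_snd.comp continuous_fst).prodMk continuous_snd))
  exact isClosed_setOf_essentialOn hR _

/-- The states at which the branch `a` may be taken. -/
def branchSet (l : List ℕ) (a : ℕ) : Set CantorSpace := Prod.fst '' τ.branchRel l a

lemma isClosed_branchSet (l : List ℕ) (a : ℕ) : IsClosed (τ.branchSet l a) :=
  isClosedMap_fst_of_compactSpace _ (τ.isClosed_branchRel l a)

/-- The branch taken at the state `s`: the first one that may be taken. -/
noncomputable def branch (l : List ℕ) (s : CantorSpace) : ℕ := sInf {a | s ∈ τ.branchSet l a}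

/-- A measurable choice of a sign sequence for the branch `a`. -/
noncomputable def pick (l : List ℕ) (a : ℕ) : CantorSpace → CantorSpace :=
  (exists_measurable_selection (τ.isClosed_branchRel l a)).choose

lemma measurable_pick (l : List ℕ) (a : ℕ) : Measurable (τ.pick l a) :=
  (exists_measurable_selection (τ.isClosed_branchRel l a)).choose_spec.1

variable {τ} in
lemma pick_mem {l : List ℕ} {a : ℕ} {s : CantorSpace} (hs : s ∈ τ.branchSet l a) :
    (s, τ.pick l a s) ∈ τ.branchRel l a := by
  obtain ⟨⟨s, z⟩, hz, rfl⟩ := hs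
  exact (exists_measurable_selection (τ.isClosed_branchRel l a)).choose_spec.2 s z hz

/-- The bits to be stored in the next state: the present state, the chosen sign sequence, and the
cue, which is chosen to contradict the prediction of the task. -/
noncomputable def payload (l : List ℕ) (a : ℕ) (s : CantorSpace) : StateIndex → Bool :=
  Sum.elim s (Sum.elim (τ.pick l a s) fun _ =>
    decide ((1 / 2 : ℝ) ≤ (τ l.length).F (τ.pick l a s) (cueDir l a)))

lemma measurable_payload (l : List ℕ) (a : ℕ) : Measurable (τ.payload l a) := by
  refine measurable_pi_iff.mpr ?_
  rintro (j | j | -)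
  · exact measurable_pi_apply j
  · exact (measurable_pi_apply j).comp (τ.measurable_pick l a)
  · refine measurable_to_bool ?_
    have hF : Measurable fun s => (((τ l.length).F (τ.pick l a s) (cueDir l a) : _) : ℝ) :=
      measurable_subtype_coe.comp ((measurable_pi_apply _).comp
        ((τ l.length).measurable_F.comp (τ.measurable_pick l a)))
    convert measurableSet_le (measurable_const (a := (1 / 2 : ℝ))) hF using 1
    ext s
    exact decide_eq_true_iff

/-- The next state; besides the payload it holds bits which make the graph of this map `Gδ`. -/
noncomputable def next (l : List ℕ) (a : ℕ) : CantorSpace → CantorSpace :=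
  (exists_isGδ_graph_storedBits_eq (τ.measurable_payload l a)).choose

lemma isGδ_graph_next (l : List ℕ) (a : ℕ) :
    IsGδ {p : CantorSpace × CantorSpace | p.2 = τ.next l a p.1} :=
  (exists_isGδ_graph_storedBits_eq (τ.measurable_payload l a)).choose_spec.1

lemma storedBits_next (l : List ℕ) (a : ℕ) (s : CantorSpace) :
    storedBits (τ.next l a s) = τ.payload l a s :=
  (exists_isGδ_graph_storedBits_eq (τ.measurable_payload l a)).choose_spec.2 s

@[simp]
lemma prevState_next (l : List ℕ) (a : ℕ) (s : CantorSpace) : prevState (τ.next l a s) = s :=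
  funext fun _ => congrFun (τ.storedBits_next l a s) _

@[simp]
lemma signState_next (l : List ℕ) (a : ℕ) (s : CantorSpace) :
    signState (τ.next l a s) = τ.pick l a s :=
  funext fun _ => congrFun (τ.storedBits_next l a s) _

lemma cueState_next (l : List ℕ) (a : ℕ) (s : CantorSpace) : cueState (τ.next l a s) =
    decide ((1 / 2 : ℝ) ≤ (τ l.length).F (τ.pick l a s) (cueDir l a)) :=
  congrFun (τ.storedBits_next l a s) _

lemma mem_arrival_cons_next_iff {l : List ℕ} {a : ℕ} {s : CantorSpace} {x : HilbertCube} :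
    (τ.next l a s, x) ∈ τ.arrival (a :: l) ↔
      x ∈ τ.slice l s ∧ x ∈ (τ l.length).outcome a (τ.pick l a s) ∧
        x (cueDir l a) = cueVal (cueState (τ.next l a s)) := by
  simp only [arrival, mem_ofPred_eq, prevState_next, signState_next, slice]

/-- The nodes and states that are reached one after the other from the initial state `c`. -/
noncomputable def run (c : CantorSpace) : ℕ → List ℕ × CantorSpace
  | 0 => ([], c)
  | m + 1 =>
    let p := run c m
    (τ.branch p.1 p.2 :: p.1, τ.next p.1 (τ.branch p.1 p.2) p.2)

@[simp]
lemma length_run (c : CantorSpace) (m : ℕ) : (τ.run c m).1.length = m := by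
  induction m with
  | zero => rfl
  | succ m ih => exact congrArg Nat.succ ih

lemma prevState_iterate_run (c : CantorSpace) (m : ℕ) : prevState^[m] (τ.run c m).2 = c := by
  induction m with
  | zero => rfl
  | succ m ih => rw [Function.iterate_succ_apply, run, prevState_next, ih]

/-- The points of a slice, provided that this slice is essential in the remaining directions. -/
def liveSlice (p : List ℕ × CantorSpace) : Set HilbertCube :=
  {x | x ∈ τ.slice p.1 p.2 ∧ EssentialOn (τ.slice p.1 p.2) (restDirs p.1)}

/-- The space attached to a sequence of tasks. -/
def space : Set HilbertCube := {x | ∃ c, ∀ m, x ∈ τ.liveSlice (τ.run c m)}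

end Definitions

section Branches

variable {τ} {l : List ℕ} {s : CantorSpace}

lemma exists_mem_branchSet (h : EssentialOn (τ.slice l s) (restDirs l)) :
    ∃ a, s ∈ τ.branchSet l a := by
  have hdirs : branchDirs l 0 ∪ ⋃ i, branchDirs l (i + 1) ⊆ restDirs l :=
    union_subset (branchDirs_subset_restDirs l 0)
      (iUnion_subset fun i => branchDirs_subset_restDirs l (i + 1))
  obtain ⟨z, hz⟩ | ⟨i, hi⟩ := (h.mono subset_rfl hdirs).exists_signRegion_or_exists_zeros
    (τ.isClosed_slice l s) (τ l.length).continuous_ψ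
    (fun i => pairwise_disjoint_branchDirs l i.succ_ne_zero.symm)
    fun i j hij => pairwise_disjoint_branchDirs l (Nat.succ_injective.ne hij)
  · exact ⟨0, (s, z), hz, rfl⟩
  · exact ⟨i + 1, (s, fun _ => false), hi, rfl⟩

lemma isLeast_branch (h : EssentialOn (τ.slice l s) (restDirs l)) :
    IsLeast {a | s ∈ τ.branchSet l a} (τ.branch l s) :=
  isLeast_csInf (exists_mem_branchSet h)

end Branches

section Gδ

/-- The points whose state at the node `l` selects the branch `a`. -/
def chooses (l : List ℕ) (a : ℕ) : Set HilbertCube :=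
  {x | ∃ s, x (freeDir l 0) = cantorCode s ∧ IsLeast {b | s ∈ τ.branchSet l b} a}

/-- The points whose states along the path `l` select this path. -/
def follows : List ℕ → Set HilbertCube
  | [] => univ
  | a :: l => follows l ∩ τ.chooses l a

/-- The points in the live slices at the node `l`. -/
def onNode (l : List ℕ) : Set HilbertCube := {x | ∃ s, x ∈ τ.liveSlice (l, s)}

/-- The points whose state at the node `a :: l` is the one that follows their state at `l`. -/
def linked (l : List ℕ) (a : ℕ) : Set HilbertCube :=
  {x | ∃ s, x (freeDir l 0) = cantorCode s ∧
    x (freeDir (a :: l) 0) = cantorCode (τ.next l a s)}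

lemma isGδ_compl_chooses (l : List ℕ) (a : ℕ) : IsGδ (τ.chooses l a)ᶜ := by
  have hclosed {C : Set CantorSpace} (hC : IsClosed C) :
      IsClosed (Function.eval (freeDir l 0) ⁻¹' (cantorCode '' C) : Set HilbertCube) :=
    (isClosedEmbedding_cantorCode.isClosedMap C hC).preimage
      (continuous_apply (A := fun _ => unitInterval) (freeDir l 0))
  have hleast : {s | IsLeast {b | s ∈ τ.branchSet l b} a} =
      τ.branchSet l a \ ⋃ b ∈ Iio a, τ.branchSet l b := by
    ext s
    simp only [IsLeast, lowerBounds, mem_ofPred_eq, mem_sdiff, mem_iUnion, mem_Iio, exists_prop,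
      not_exists, not_and, and_congr_right_iff]
    exact fun _ => forall_congr' fun b => by rw [← not_lt, imp_not_comm]
  have hchooses : τ.chooses l a = Function.eval (freeDir l 0) ⁻¹'
      (cantorCode '' {s | IsLeast {b | s ∈ τ.branchSet l b} a}) := by
    ext x
    simp only [chooses, mem_ofPred_eq, mem_preimage, mem_image, Function.eval, eq_comm, and_comm]
  rw [hchooses, hleast, image_sdiff cantorCode_injective, preimage_sdiff, Set.compl_sdiff]
  exact (hclosed ((finite_Iio a).isClosed_biUnion fun b _ => τ.isClosed_branchSet l b)).isGδ.union
    (hclosed (τ.isClosed_branchSet l a)).isOpen_compl.isGδ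

lemma isGδ_compl_follows (l : List ℕ) : IsGδ (τ.follows l)ᶜ := by
  induction l with
  | nil => simpa only [follows, compl_univ] using IsGδ.empty
  | cons a l ih =>
    rw [follows, compl_inter]
    exact ih.union (τ.isGδ_compl_chooses l a)

lemma isClosed_onNode (l : List ℕ) : IsClosed (τ.onNode l) := by
  have hess : IsClosed {s | EssentialOn (τ.slice l s) (restDirs l)} :=
    isClosed_setOf_essentialOn (τ.isClosed_setOf_mem_slice l) _
  have hlive : IsClosed {p : CantorSpace × HilbertCube | p.2 ∈ τ.liveSlice (l, p.1)} :=
    (τ.isClosed_setOf_mem_slice l).inter (hess.preimage continuous_fst)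
  convert isClosedMap_snd_of_compactSpace _ hlive using 1
  ext x
  simp only [onNode, mem_ofPred_eq, mem_image, Prod.exists, exists_eq_right]

lemma isGδ_linked (l : List ℕ) (a : ℕ) : IsGδ (τ.linked l a) := by
  have hcode : Topology.IsClosedEmbedding (Prod.map cantorCode cantorCode) :=
    isClosedEmbedding_cantorCode.prodMap isClosedEmbedding_cantorCode
  have hlinked : τ.linked l a =
      (fun x : HilbertCube => (x (freeDir l 0), x (freeDir (a :: l) 0))) ⁻¹'
        (Prod.map cantorCode cantorCode '' {p | p.2 = τ.next l a p.1}) := by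
    ext x
    simp only [linked, mem_ofPred_eq, mem_preimage, mem_image, Prod.exists, Prod.map_apply,
      Prod.mk.injEq]
    exact exists_congr fun s => by simp only [exists_eq_left, eq_comm]
  rw [hlinked]
  exact (isGδ_image_of_isClosedEmbedding hcode (τ.isGδ_graph_next l a)).preimage (by fun_prop)

variable {τ} {x : HilbertCube} {c : CantorSpace}

lemma eq_run_of_follows (hx : ∀ m, x ∈ τ.liveSlice (τ.run c m)) {l : List ℕ}
    (hl : x ∈ τ.follows l) : l = (τ.run c l.length).1 := by
  induction l with
  | nil => rfl
  | cons a l ih =>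
    obtain ⟨hxl, s, hs, ha⟩ := hl
    have hl := ih hxl
    obtain ⟨hslice, hess⟩ := hx l.length
    rw [← hl] at hslice hess
    obtain rfl : s = (τ.run c l.length).2 :=
      cantorCode_injective (hs.symm.trans (apply_freeDir_zero_of_mem_slice hslice))
    rw [List.length_cons, run, ← hl, ha.unique (isLeast_branch hess)]

lemma follows_run (hnode : ∀ l, x ∈ τ.follows l → x ∈ τ.onNode l)
    (hlink : ∀ l a, x ∈ τ.follows (a :: l) → x ∈ τ.linked l a) (hc : x 0 = cantorCode c) (m : ℕ) :
    x ∈ τ.follows (τ.run c m).1 ∧ x ∈ τ.liveSlice (τ.run c m) := by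
  suffices h : x ∈ τ.follows (τ.run c m).1 ∧
      x (freeDir (τ.run c m).1 0) = cantorCode (τ.run c m).2 by
    obtain ⟨s, hs⟩ := hnode _ h.1
    obtain rfl := cantorCode_injective ((apply_freeDir_zero_of_mem_slice hs.1).symm.trans h.2)
    exact ⟨h.1, hs⟩
  induction m with
  | zero => exact ⟨mem_univ x, hc⟩
  | succ m ih =>
    obtain ⟨hfol, hcode⟩ := ih
    obtain ⟨s, hslice, hess⟩ := hnode _ hfol
    obtain rfl := cantorCode_injective ((apply_freeDir_zero_of_mem_slice hslice).symm.trans hcode)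
    have hfol' : x ∈ τ.follows (τ.run c (m + 1)).1 := ⟨hfol, _, hcode, isLeast_branch hess⟩
    obtain ⟨s, hs, hs'⟩ := hlink _ _ hfol'
    obtain rfl := cantorCode_injective (hs.symm.trans hcode)
    exact ⟨hfol', hs'⟩

lemma mem_space_iff_forall_follows : x ∈ τ.space ↔ (∀ l, x ∈ τ.follows l → x ∈ τ.onNode l) ∧
    ∀ l a, x ∈ τ.follows (a :: l) → x ∈ τ.linked l a := by
  refine ⟨fun ⟨c, hx⟩ => ⟨fun l hl => ?_, fun l a hl => ?_⟩, fun ⟨hnode, hlink⟩ => ?_⟩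
  · have hlive := hx l.length
    rw [← Prod.mk.eta (p := τ.run c l.length), ← eq_run_of_follows hx hl] at hlive
    exact ⟨_, hlive⟩
  · have hrun := eq_run_of_follows hx hl
    obtain ⟨ha, hl⟩ := List.cons_eq_cons.mp hrun
    have hcode := apply_freeDir_zero_of_mem_slice (hx l.length).1
    have hcode' := apply_freeDir_zero_of_mem_slice (hx (a :: l).length).1
    rw [← hrun, List.length_cons, run, ← ha, ← hl] at hcode'
    rw [← hl] at hcode
    exact ⟨_, hcode, hcode'⟩
  · obtain ⟨c, hc⟩ := hnode [] (mem_univ x)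
    exact ⟨c, fun m =>
      (follows_run hnode hlink (apply_freeDir_zero_of_mem_slice hc.1) m).2⟩

lemma isGδ_space : IsGδ τ.space := by
  have hspace : τ.space = (⋂ l, ((τ.follows l)ᶜ ∪ τ.onNode l)) ∩
      ⋂ l, ⋂ a, ((τ.follows (a :: l))ᶜ ∪ τ.linked l a) := by
    ext x
    simp only [mem_space_iff_forall_follows, mem_inter_iff, mem_iInter, mem_union, mem_compl_iff,
      imp_iff_not_or]
  rw [hspace]
  exact .inter (.iInter fun l => (τ.isGδ_compl_follows l).union (τ.isClosed_onNode l).isGδ)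
    (.iInter fun l => .iInter fun a => (τ.isGδ_compl_follows _).union (τ.isGδ_linked l a))

end Gδ

section Dimension

variable {τ}

lemma essentialOn_slice {l : List ℕ} {s : CantorSpace} {g : HilbertCube → ℝ}
    (h : EssentialOn {x | (s, x) ∈ τ.arrival l} (range (freeDir l)))
    (hg : FaceSeparator (freeDir l 1) g)
    (hs : openCode (prevState^[l.length] s) (l.length, freeDir l 1) = {x | g x ≠ 0}) :
    EssentialOn (τ.slice l s) (restDirs l) := by
  have hcode := h.inter_zeros (mem_range_self 0) (faceSeparator_sub_const _ (cantorCode s))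
  have hpartition := hcode.inter_zeros
    ⟨mem_range_self 1, (freeDir_injective l).ne one_ne_zero⟩ hg
  refine hpartition.mono ?_ (restDirs_subset l)
  rintro x ⟨⟨hx, hxs⟩, hxg⟩
  refine ⟨hx, Subtype.ext (sub_eq_zero.mp hxs), ?_⟩
  simpa only [hs, mem_ofPred_eq, not_not] using hxg

lemma essentialOn_arrival_cons_next {l : List ℕ} {a : ℕ} {s : CantorSpace}
    (hs : s ∈ τ.branchSet l a) :
    EssentialOn {x | (τ.next l a s, x) ∈ τ.arrival (a :: l)} (range (freeDir (a :: l))) := by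
  have hcue := (pick_mem hs).inter_zeros (k := cueDir l a) (mem_range_self 0)
    (faceSeparator_sub_const _ (cueVal (cueState (τ.next l a s))))
  refine hcue.mono ?_ (range_freeDir_cons_subset l a)
  rintro x ⟨⟨hx, hxa⟩, hxc⟩
  exact (τ.mem_arrival_cons_next_iff).mpr ⟨hx, hxa, Subtype.ext (sub_eq_zero.mp hxc)⟩

lemma essentialOn_slice_run {g : ℕ → ℕ → HilbertCube → ℝ} (hg : ∀ m k, FaceSeparator k (g m k))
    {c : CantorSpace} (hc : ∀ m k, openCode c (m, k) = {x | g m k x ≠ 0}) (m : ℕ) :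
    EssentialOn (τ.slice (τ.run c m).1 (τ.run c m).2) (restDirs (τ.run c m).1) := by
  refine essentialOn_slice ?_ (hg m _) (by rw [length_run, prevState_iterate_run, hc])
  induction m with
  | zero => exact essentialOn_univ.mono (subset_univ _) (subset_univ _)
  | succ m ih =>
    refine essentialOn_arrival_cons_next (isLeast_branch ?_).1
    exact essentialOn_slice ih (hg m _) (by rw [length_run, prevState_iterate_run, hc])

lemma exists_forall_mem_liveSlice_run {c : CantorSpace}
    (h : ∀ m, EssentialOn (τ.slice (τ.run c m).1 (τ.run c m).2) (restDirs (τ.run c m).1)) :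
    ∃ x, ∀ m, x ∈ τ.liveSlice (τ.run c m) := by
  obtain ⟨x, hx⟩ := IsCompact.nonempty_iInter_of_sequence_nonempty_isCompact_isClosed
    (fun m => τ.slice (τ.run c m).1 (τ.run c m).2)
    (fun m x hx => ((τ.mem_arrival_cons_next_iff).mp hx.1).1)
    (fun m => (h m).nonempty) (τ.isClosed_slice _ _).isCompact fun m => τ.isClosed_slice _ _
  exact ⟨x, fun m => ⟨mem_iInter.mp hx m, h m⟩⟩

-- The initial state codes partitions that miss the given zero-dimensional sets.
lemma not_countableDimensional_space : ¬ CountableDimensional τ.space := by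
  intro h
  obtain ⟨Z, hZ, hcover⟩ := h.exists_subset_iUnion
  choose g hg hgZ using fun m k => (hZ m).exists_faceSeparator k
  obtain ⟨c, hc⟩ := exists_openCode_eq (U := fun e : ℕ × ℕ => {x | g e.1 e.2 x ≠ 0})
    fun e => isOpen_ne_fun (hg e.1 e.2).continuous continuous_const
  obtain ⟨x, hx⟩ := exists_forall_mem_liveSlice_run
    (essentialOn_slice_run hg fun m k => hc (m, k))
  obtain ⟨m, hxm⟩ := mem_iUnion.mp (hcover ⟨c, hx⟩)
  have hpartition := (hx m).1.2.2
  rw [length_run, prevState_iterate_run, hc] at hpartition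
  exact hpartition (hgZ m _ x hxm)

end Dimension

section Avoidance

variable {τ}

lemma disjoint_space_captured (m : ℕ) : Disjoint τ.space (τ m).captured := by
  refine Set.disjoint_left.mpr fun x ⟨c, hx⟩ => ?_
  obtain ⟨-, hout, hcue⟩ := (τ.mem_arrival_cons_next_iff).mp (hx (m + 1)).1.1
  rw [cueState_next] at hcue
  have hne := hcue.trans_ne (cueVal_decide_ne _)
  rw [length_run] at hout hne
  exact AvoidanceTask.notMem_captured_of_mem_outcome hout hne

lemma eq_of_forall_mem_liveSlice_run (hτ : ∀ j, AvoidanceTask.coordinate j ∈ range τ)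
    {c : CantorSpace} {x y : HilbertCube} (hx : ∀ m, x ∈ τ.liveSlice (τ.run c m))
    (hy : ∀ m, y ∈ τ.liveSlice (τ.run c m)) : x = y := by
  funext j
  obtain ⟨m, hm⟩ := hτ j
  have hxm := ((τ.mem_arrival_cons_next_iff).mp (hx (m + 1)).1.1).2.1
  have hym := ((τ.mem_arrival_cons_next_iff).mp (hy (m + 1)).1.1).2.1
  rw [length_run, hm] at hxm hym
  exact AvoidanceTask.apply_eq_of_mem_outcome_coordinate hxm hym

-- The code of the initial state is a continuous injective function on the Borel set `τ.space`, so
-- its inverse is measurable by the Lusin–Souslin theorem.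
lemma exists_measurable_inverse (hτ : ∀ j, AvoidanceTask.coordinate j ∈ range τ) :
    ∃ f : CantorSpace → HilbertCube, Measurable f ∧
      ∀ x ∈ τ.space, ∃ s, x 0 = cantorCode s ∧ f s = x := by
  choose c hc using fun x : τ.space => x.2
  have hcode (x : τ.space) : x.1 0 = cantorCode (c x) :=
    apply_freeDir_zero_of_mem_slice (hc x 0).1
  have hcont : Continuous c := by
    rw [isClosedEmbedding_cantorCode.isInducing.continuous_iff]
    exact ((continuous_apply 0).comp continuous_subtype_val).congr hcode
  have hinj : Function.Injective c := fun x y hxy =>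
    Subtype.ext (eq_of_forall_mem_liveSlice_run hτ (hc x) (hxy ▸ hc y))
  have : StandardBorelSpace τ.space := τ.isGδ_space.measurableSet.standardBorel
  obtain ⟨f, hf, hfx⟩ := (hcont.measurable.measurableEmbedding hinj).exists_measurable_extend
    (measurable_subtype_coe (p := fun x => x ∈ τ.space)) fun _ => inferInstance
  exact ⟨f, hf, fun x hx => ⟨c ⟨x, hx⟩, hcode ⟨x, hx⟩, congrFun hfx ⟨x, hx⟩⟩⟩

end Avoidance

end TaskSequence

/-! ### The transfinite family -/

/-- A `Gδ` set which is not countable-dimensional, with a Borel map `decode` recovering its points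
from their coordinates at `0`, which are codes of elements of the Cantor space. -/
structure CodedSpace where
  carrier : Set HilbertCube
  decode : CantorSpace → HilbertCube
  isGδ : IsGδ carrier
  measurable_decode : Measurable decode
  exists_code {x : HilbertCube} (hx : x ∈ carrier) : ∃ s, x 0 = cantorCode s ∧ decode s = x
  not_countableDimensional : ¬ CountableDimensional carrier

namespace CodedSpace

/-- The space `P` avoids the traps of the space `Q`. -/
def Avoids (P Q : CodedSpace) : Prop := ∀ k j, Disjoint P.carrier (trap Q.decode k j)

lemma exists_avoids {𝒬 : Set CodedSpace} (h𝒬 : 𝒬.Countable) :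
    ∃ P : CodedSpace, ∀ Q ∈ 𝒬, P.Avoids Q := by
  have : Countable 𝒬 := h𝒬.to_subtype
  choose t ht using fun (Q : 𝒬) k j => exists_trap_subset_captured Q.1.measurable_decode k j
  obtain ⟨τ, hτ⟩ := ((countable_range AvoidanceTask.coordinate).union
    (countable_range fun p : 𝒬 × ℕ × Gap => t p.1 p.2.1 p.2.2)).exists_eq_range
      ((range_nonempty _).inl)
  obtain ⟨hcoord, htrap⟩ := union_subset_iff.mp hτ.le
  obtain ⟨f, hf, hfx⟩ := TaskSequence.exists_measurable_inverse
    (τ := τ) fun j => hcoord (mem_range_self j)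
  refine ⟨⟨_, f, TaskSequence.isGδ_space, hf, hfx _, TaskSequence.not_countableDimensional_space⟩,
    fun Q hQ k j => ?_⟩
  obtain ⟨m, hm⟩ := htrap ⟨(⟨Q, hQ⟩, k, j), rfl⟩
  exact (TaskSequence.disjoint_space_captured m).mono_right (hm ▸ ht ⟨Q, hQ⟩ k j)

section Embeddings

variable {P Q : CodedSpace} {W : Type*} [TopologicalSpace W] {f g : W → HilbertCube}

lemma exists_forall_cantorCodeIn_mem_trap (hf : Topology.IsInducing f) (hg : Topology.IsInducing g)
    (hgQ : ∀ w, g w ∈ Q.carrier) :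
    ∃ r, ∀ k j w, f w k = cantorCodeIn j r → f w ∈ trap Q.decode k j := by
  choose u hu hdecode using fun w => Q.exists_code (hgQ w)
  have hu_cont : Continuous u := by
    rw [isClosedEmbedding_cantorCode.isInducing.continuous_iff]
    exact ((continuous_apply 0).comp hg.continuous).congr hu
  have hopen (e : TrapIndex) : ∃ V : Set HilbertCube, IsOpen V ∧
      Sum.elim (fun B : TopologicalSpace.countableBasis HilbertCube => g ⁻¹' V = f ⁻¹' B)
        (fun p : ℕ × Bool => f ⁻¹' V = {w | u w p.1 = p.2}) e := by
    obtain B | ⟨i, b⟩ := e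
    · exact hg.isOpen_iff.mp
        ((TopologicalSpace.isOpen_of_mem_countableBasis B.2).preimage hf.continuous)
    · exact hf.isOpen_iff.mp
        ((isOpen_discrete {b}).preimage ((continuous_apply i).comp hu_cont))
  choose V hV_open hV using hopen
  obtain ⟨r, hr⟩ := exists_openCode_eq hV_open
  refine ⟨r, fun k j w hw => ⟨r, u w, hw, fun i b => ?_, ?_⟩⟩
  · rw [hr]
    exact Set.ext_iff.mp (hV (Sum.inr (i, b))) w
  · rw [hdecode]
    refine codedMap_eq fun B => ?_
    rw [hr]
    exact Set.ext_iff.mp (hV (Sum.inl B)) w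

-- The coordinates of the points omit the codes of the embedding, and these are dense.
lemma Avoids.zeroDimensional (h : P.Avoids Q) (hf : Topology.IsInducing f)
    (hfP : ∀ w, f w ∈ P.carrier) (hg : Topology.IsInducing g) (hgQ : ∀ w, g w ∈ Q.carrier) :
    ZeroDimensional W := by
  obtain ⟨r, hr⟩ := exists_forall_cantorCodeIn_mem_trap hf hg hgQ
  have hrange : ZeroDimensional (range f) := by
    refine zeroDimensional_of_eval_image fun k => zeroDimensional_of_dense_compl ?_
    refine (denseRange_cantorCodeIn r).mono ?_
    rintro _ ⟨j, rfl⟩ ⟨_, ⟨w, rfl⟩, hw⟩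
    exact Set.disjoint_left.mp (h k j) (hfP w) (hr k j w hw)
  exact hrange.of_isInducing (hf.codRestrict mem_range_self)

end Embeddings

end CodedSpace

lemma exists_forall_lt_rel {ι β : Type*} [LT ι] [WellFoundedLT ι] {r : β → β → Prop}
    (hι : ∀ i : ι, {j | j < i}.Countable)
    (hr : ∀ s : Set β, s.Countable → ∃ b, ∀ a ∈ s, r b a) :
    ∃ f : ι → β, ∀ i j, j < i → r (f i) (f j) := by
  choose next hnext using hr
  have hcount (i : ι) (prev : ∀ j, j < i → β) :
      (range fun j : {j | j < i} => prev j j.2).Countable :=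
    have := (hι i).to_subtype
    countable_range _
  let f : ι → β := wellFounded_lt.fix fun i prev => next _ (hcount i prev)
  refine ⟨f, fun i j hj => ?_⟩
  have hf : f i = next _ (hcount i fun j _ => f j) := wellFounded_lt.fix_eq _ i
  rw [hf]
  exact hnext _ _ _ ⟨⟨j, hj⟩, rfl⟩

/-! ### Compactifications with small remainder -/

lemma exists_unitInterval_preimage_zero {X : Type*} [TopologicalSpace X] [PerfectlyNormalSpace X]
    {C : Set X} (hC : IsClosed C) : ∃ b : C(X, unitInterval), b ⁻¹' {0} = C := by
  obtain ⟨b, rfl, hb⟩ := perfectlyNormalSpace_iff_forall_isClosed_preimage_zero.mp ‹_› C hC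
  refine ⟨⟨fun x => ⟨b x, hb x⟩, by fun_prop⟩, ?_⟩
  ext x
  exact Subtype.ext_iff

lemma exists_eventually_zero_iff_notMem {X : Type*} [TopologicalSpace X] [PerfectlyNormalSpace X]
    {P : Set X} (hP : IsGδ P) : ∃ p : ℕ → C(X, unitInterval),
      (∀ x ∈ P, ∀ n, p n x ≠ 0) ∧ ∀ x ∉ P, ∀ᶠ n in Filter.atTop, p n x = 0 := by
  obtain ⟨U, hU, rfl⟩ := hP.eq_iInter_nat
  choose b hb using fun n => exists_unitInterval_preimage_zero (hU n).isClosed_compl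
  have hb_iff (j : ℕ) (x : X) : b j x = 0 ↔ x ∉ U j := Set.ext_iff.mp (hb j) x
  refine ⟨fun n => ∏ j ∈ Finset.range n, b j, fun x hx n => ?_, fun x hx => ?_⟩
  · rw [ContinuousMap.prod_apply, Finset.prod_ne_zero_iff]
    exact fun j _ h => (hb_iff j x).mp h (mem_iInter.mp hx j)
  · obtain ⟨m, hm⟩ := not_forall.mp (mt mem_iInter.mpr hx)
    filter_upwards [Filter.eventually_gt_atTop m] with n hn
    rw [ContinuousMap.prod_apply]
    exact Finset.prod_eq_zero (Finset.mem_range.mpr hn) ((hb_iff m x).mpr hm)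

section Damp

variable {ι : Type*}

/-- The map whose coordinates are the products `p i x * x i` and their first factors `p i x`. Where
no `p i` vanishes, the quotients recover `x`. -/
def damp (p : ι → C(Cube ι, unitInterval)) (x : Cube ι) : Cube (ι ⊕ ι) :=
  Sum.elim (fun i => p i x * x i) fun i => p i x

variable {p : ι → C(Cube ι, unitInterval)}

lemma continuous_damp : Continuous (damp p) := by
  refine continuous_pi fun s => ?_
  cases s <;> simp only [damp, Sum.elim_inl, Sum.elim_inr] <;> fun_prop

lemma isEmbedding_domRestrict_damp {P : Set (Cube ι)} (hp : ∀ x ∈ P, ∀ i, p i x ≠ 0) :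
    Topology.IsEmbedding (P.domRestrict (damp p)) := by
  have hcont : Continuous (P.domRestrict (damp p)) := continuous_damp.comp continuous_subtype_val
  refine ⟨Topology.isInducing_iff_nhds.mpr fun x => (hcont.tendsto x).le_comap.antisymm ?_,
    fun x y hxy => ?_⟩
  · rw [nhds_subtype_eq_comap, ← Filter.tendsto_iff_comap, tendsto_pi_nhds]
    intro i
    have hcoord (s : ι ⊕ ι) : Filter.Tendsto (fun y : P => (damp p y s : ℝ))
        (Filter.comap (P.domRestrict (damp p)) (nhds (damp p x))) (nhds (damp p x s)) :=
      have hs : Continuous fun z : Cube (ι ⊕ ι) => (z s : ℝ) :=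
        continuous_subtype_val.comp (continuous_apply s)
      (hs.tendsto _).comp Filter.tendsto_comap
    have hquot (y : P) : (damp p y (Sum.inl i) / damp p y (Sum.inr i) : ℝ) = y.1 i :=
      mul_div_cancel_left₀ _ (Subtype.coe_ne_coe.mpr (hp y y.2 i))
    rw [tendsto_subtype_rng, ← hquot]
    exact ((hcoord (Sum.inl i)).div (hcoord (Sum.inr i))
      (Subtype.coe_ne_coe.mpr (hp x x.2 i))).congr hquot
  · refine Subtype.ext (funext fun i => ?_)
    have hfactor : p i x = p i y := congrFun hxy (Sum.inr i)
    have hproduct : p i x * x.1 i = p i y * y.1 i := congrFun hxy (Sum.inl i)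
    rw [← hfactor] at hproduct
    exact mul_left_cancel₀ (hp x x.2 i) hproduct

end Damp

lemma exists_compactification {P : Set HilbertCube} (hP : IsGδ P) :
    ∃ e : HilbertCube → HilbertCube, Continuous e ∧ Topology.IsEmbedding (P.domRestrict e) ∧
      CountableDimensional (e '' Pᶜ) := by
  obtain ⟨p, hp, hp_zero⟩ := exists_eventually_zero_iff_notMem hP
  let h : Cube (ℕ ⊕ ℕ) ≃ₜ HilbertCube :=
    (Homeomorph.piCongrLeft (Y := fun _ => unitInterval) Equiv.natSumNatEquivNat.symm).symm
  refine ⟨h ∘ damp p, h.continuous.comp continuous_damp,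
    h.isEmbedding.comp (isEmbedding_domRestrict_damp hp),
    countableDimensional_setOf_eventually_eq_zero.mono ?_⟩
  rintro _ ⟨x, hx, rfl⟩
  have hfinite : {s | damp p x s ≠ 0}.Finite := by
    have hx_finite := hp_zero x hx
    rw [← Nat.cofinite_eq_atTop, Filter.eventually_cofinite] at hx_finite
    refine finite_preimage_inl_and_inr.mp ⟨hx_finite.subset fun i => mt fun hi => ?_, hx_finite⟩
    exact mul_eq_zero_of_left hi _
  rw [mem_ofPred_eq, ← Nat.cofinite_eq_atTop]
  exact Equiv.natSumNatEquivNat.symm.injective.tendsto_cofinite.eventually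
    (Filter.eventually_cofinite.mpr hfinite)

/-! ### Small overlap -/

section SmallOverlap

universe u

variable {X Y Z : Type u} [TopologicalSpace X] [TopologicalSpace Y] [TopologicalSpace Z]

/-- Every space which embeds into both `X` and `Y` is countable-dimensional. -/
def SmallOverlap (X Y : Type u) [TopologicalSpace X] [TopologicalSpace Y] : Prop :=
  ∀ ⦃W : Type u⦄ [TopologicalSpace W] ⦃f : W → X⦄ ⦃g : W → Y⦄,
    Topology.IsEmbedding f → Topology.IsEmbedding g → CountableDimensional W

lemma CountableDimensional.smallOverlap (h : CountableDimensional Y) : SmallOverlap Z Y :=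
  fun _ _ _ _ _ hg => h.of_isInducing hg.isInducing

lemma CodedSpace.Avoids.smallOverlap {P Q : CodedSpace} (h : P.Avoids Q) :
    SmallOverlap P.carrier Q.carrier := fun _ _ f g hf hg =>
  (h.zeroDimensional (Topology.IsInducing.subtypeVal.comp hf.isInducing) (fun w => (f w).2)
    (Topology.IsInducing.subtypeVal.comp hg.isInducing) fun w => (g w).2).countableDimensional

namespace SmallOverlap

lemma symm (h : SmallOverlap X Y) : SmallOverlap Y X := fun _ _ _ _ hf hg => h hg hf

lemma of_isEmbedding (h : SmallOverlap Z Y) {e : X → Y} (he : Topology.IsEmbedding e) :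
    SmallOverlap Z X := fun _ _ _ _ hf hg => h hf (he.comp hg)

lemma countableDimensional (h : SmallOverlap X Y) {e : X → Y} (he : Topology.IsEmbedding e) :
    CountableDimensional X := h .id he

lemma of_iUnion_eq_univ {ι : Type*} [Countable ι] {A : ι → Set Y} (hA : ⋃ i, A i = univ)
    (h : ∀ i, SmallOverlap Z (A i)) : SmallOverlap Z Y := fun _ _ _ g hf hg =>
  countableDimensional_of_iUnion_eq_univ (A := fun i => g ⁻¹' A i)
    (by rw [← preimage_iUnion, hA, preimage_univ])
    fun i => h i (hf.comp .subtypeVal) (hg.restrictPreimage (A i))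

lemma of_sigmaEmbeddable (h : SmallOverlap Z Y) (hXY : SigmaEmbeddable X Y) :
    SmallOverlap Z X := by
  obtain ⟨A, hA, hB⟩ := hXY
  refine of_iUnion_eq_univ hA fun n => ?_
  obtain ⟨B, ⟨φ⟩⟩ := hB n
  exact h.of_isEmbedding (Topology.IsEmbedding.subtypeVal.comp φ.isEmbedding)

lemma iUnion {ι : Type*} [Countable ι] {A : ι → Set Y} (h : ∀ i, SmallOverlap Z (A i)) :
    SmallOverlap Z (⋃ i, A i : Set Y) := by
  refine of_iUnion_eq_univ (A := fun i => Subtype.val ⁻¹' A i) ?_ fun i => ?_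
  · rw [← preimage_iUnion, Subtype.coe_preimage_self]
  · exact (h i).of_isEmbedding (Topology.IsEmbedding.subtypeVal.restrictPreimage (A i))

lemma union {A B : Set Y} (hA : SmallOverlap Z A) (hB : SmallOverlap Z B) :
    SmallOverlap Z (A ∪ B : Set Y) := by
  rw [union_eq_iUnion]
  exact iUnion (Bool.forall_bool.mpr ⟨hB, hA⟩)

lemma range_of_domRestrict {P : Set X} (h : SmallOverlap Z P) {e : X → Y}
    (he : Topology.IsEmbedding (P.domRestrict e)) (hP : CountableDimensional (e '' Pᶜ)) :
    SmallOverlap Z (range e) := by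
  have hrange : range e = range (P.domRestrict e) ∪ e '' Pᶜ := by
    rw [range_domRestrict, ← image_union, union_compl_self, image_univ]
  rw [hrange]
  exact (h.of_isEmbedding he.toHomeomorph.symm.isEmbedding).union hP.smallOverlap

end SmallOverlap

end SmallOverlap

lemma exists_isCompact_pairwise_smallOverlap {ι : Type*} [LinearOrder ι] [WellFoundedLT ι]
    (hι : ∀ i : ι, {j | j < i}.Countable) : ∃ X : ι → Set HilbertCube,
      (∀ i, IsCompact (X i)) ∧ (∀ i, ¬ CountableDimensional (X i)) ∧
      Pairwise fun i j => SmallOverlap (X i) (X j) := by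
  obtain ⟨P, hP⟩ := exists_forall_lt_rel hι fun _ => CodedSpace.exists_avoids
  choose e he_cont he hrem using fun i => exists_compactification (P i).isGδ
  have hlt {i j : ι} (hij : j < i) : SmallOverlap (range (e i)) (range (e j)) :=
    ((hP i j hij).smallOverlap.range_of_domRestrict (he j) (hrem j)).symm.range_of_domRestrict
      (he i) (hrem i) |>.symm
  refine ⟨fun i => range (e i), fun i => isCompact_range (he_cont i), fun i h => ?_,
    fun i j hij => hij.lt_or_gt.elim (fun h => (hlt h).symm) hlt⟩
  exact (P i).not_countableDimensional
    (h.of_isInducing ((he i).isInducing.codRestrict fun x => mem_range_self x.1))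

/-! ### Unions of shrinking copies -/

section ShrinkingUnion

variable {κ : Type*} {c : κ → unitInterval} {X : κ → Set HilbertCube}

/-- The union of the copies `c i • X i` together with `0`; it is compact when the `X i` are compact
and `c` tends to `0`. The copies are allowed to intersect. -/
def shrinkingUnion (c : κ → unitInterval) (X : κ → Set HilbertCube) : Set HilbertCube :=
  {0} ∪ ⋃ i, (c i • ·) '' X i

lemma exists_tendsto_cofinite_zero (κ : Type*) [Countable κ] :
    ∃ c : κ → unitInterval, (∀ i, c i ≠ 0) ∧ Filter.Tendsto c Filter.cofinite (nhds 0) := by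
  obtain ⟨ν, hν⟩ := exists_injective_nat κ
  refine ⟨fun i => ⟨1 / (ν i + 1), by positivity, ?_⟩, fun i h => ?_, ?_⟩
  · exact div_le_one_of_le₀ (by simp) (by positivity)
  · exact Nat.one_div_pos_of_nat.ne' (congrArg Subtype.val h)
  · rw [tendsto_subtype_rng]
    exact tendsto_one_div_add_atTop_nhds_zero_nat.comp
      (Nat.cofinite_eq_atTop ▸ hν.tendsto_cofinite)

lemma isEmbedding_smul {a : unitInterval} (ha : a ≠ 0) :
    Topology.IsEmbedding fun x : HilbertCube => a • x :=
  ((continuous_const_smul a).isClosedEmbedding fun _ _ h =>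
    funext fun i => mul_left_cancel₀ ha (congrFun h i)).isEmbedding

lemma tendsto_sigma_fst_cocompact {F : κ → Type*} [∀ i, TopologicalSpace (F i)]
    [∀ i, CompactSpace (F i)] :
    Filter.Tendsto (Sigma.fst : (Σ i, F i) → κ) (Filter.cocompact _) Filter.cofinite := by
  intro s hs
  refine Filter.mem_cocompact.mpr ⟨⋃ i ∈ sᶜ, range (Sigma.mk i),
    hs.isCompact_biUnion fun i _ => isCompact_range continuous_sigmaMk, ?_⟩
  rintro ⟨i, x⟩ hx
  by_contra hi
  exact hx (mem_biUnion hi ⟨x, rfl⟩)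

lemma isCompact_shrinkingUnion (hc : Filter.Tendsto c Filter.cofinite (nhds 0))
    (hX : ∀ i, IsCompact (X i)) : IsCompact (shrinkingUnion c X) := by
  have (i : κ) : CompactSpace (X i) := isCompact_iff_compactSpace.mp (hX i)
  let f (p : Σ i, X i) : HilbertCube := c p.1 • p.2.1
  have hrange : shrinkingUnion c X = insert 0 (range f) := by
    rw [shrinkingUnion, singleton_union, range_sigma_eq_iUnion_range]
    simp only [f, image_eq_range]
  rw [hrange]
  refine Filter.Tendsto.isCompact_insert_range_of_cocompact (tendsto_pi_nhds.mpr fun n => ?_)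
    (continuous_sigma fun i => continuous_subtype_val.const_smul (c i))
  exact tendsto_of_tendsto_of_tendsto_of_le_of_le tendsto_const_nhds
    (hc.comp tendsto_sigma_fst_cocompact) (fun _ => bot_le) fun _ => unitInterval.mul_le_left

lemma sigmaEmbeddable_of_iUnion_eq_univ {X Y ι : Type*} [TopologicalSpace X] [TopologicalSpace Y]
    [Countable ι] [Nonempty ι] {A : ι → Set X} (hA : ⋃ i, A i = univ)
    (h : ∀ i, ∃ e : A i → Y, Topology.IsEmbedding e) : SigmaEmbeddable X Y := by
  obtain ⟨φ, hφ⟩ := exists_surjective_nat ι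
  refine ⟨A ∘ φ, (hφ.iUnion_comp A).trans hA, fun n => ?_⟩
  obtain ⟨e, he⟩ := h (φ n)
  exact ⟨range e, ⟨he.toHomeomorph⟩⟩

lemma exists_isEmbedding_shrinkingUnion (hc : ∀ i, c i ≠ 0) (i : κ) :
    ∃ e : X i → shrinkingUnion c X, Topology.IsEmbedding e :=
  ⟨_, ((isEmbedding_smul (hc i)).comp .subtypeVal).codRestrict _ fun x =>
    Or.inr (mem_iUnion.mpr ⟨i, mem_image_of_mem _ x.2⟩)⟩

lemma sigmaEmbeddable_shrinkingUnion {κ' : Type*} [Countable κ'] {c' : κ' → unitInterval}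
    (hc : ∀ i, c i ≠ 0) (hc' : ∀ i, c' i ≠ 0) (φ : κ' → κ) :
    SigmaEmbeddable (shrinkingUnion c' (X ∘ φ)) (shrinkingUnion c X) := by
  let A : Option κ' → Set HilbertCube := fun o => o.elim {0} fun i => (c' i • ·) '' X (φ i)
  have hA : shrinkingUnion c' (X ∘ φ) = ⋃ o, A o := (iUnion_option A).symm
  refine sigmaEmbeddable_of_iUnion_eq_univ (A := fun o => Subtype.val ⁻¹' A o) ?_ fun o => ?_
  · rw [← preimage_iUnion, ← hA, Subtype.coe_preimage_self]
  · have hι := (Topology.IsEmbedding.subtypeVal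
      (p := (· ∈ shrinkingUnion c' (X ∘ φ)))).restrictPreimage (A o)
    obtain _ | i := o
    · exact ⟨_, (Topology.IsEmbedding.subtypeVal.comp hι).codRestrict _ fun x => Or.inl x.2⟩
    · obtain ⟨e, he⟩ := exists_isEmbedding_shrinkingUnion (X := X) hc (φ i)
      exact ⟨_, he.comp (((isEmbedding_smul (hc' i)).homeomorphImage _).symm.isEmbedding.comp hι)⟩

lemma smallOverlap_shrinkingUnion {Z : Type} [TopologicalSpace Z] [Countable κ]
    (hc : ∀ i, c i ≠ 0) (h : ∀ i, SmallOverlap Z (X i)) :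
    SmallOverlap Z (shrinkingUnion c X) :=
  zeroDimensional_of_subsingleton.countableDimensional.smallOverlap.union <| .iUnion fun i =>
    (h i).of_isEmbedding ((isEmbedding_smul (hc i)).homeomorphImage _).symm.isEmbedding

end ShrinkingUnion

/-! ### The order embedding -/

theorem exists_subset_iff_sigmaEmbeddable {ι : Type*} [LinearOrder ι] [WellFoundedLT ι]
    (hι : ∀ i : ι, {j | j < i}.Countable) : ∃ F : Set ι → Set HilbertCube,
      (∀ S, S.Countable → IsCompact (F S)) ∧
      ∀ S T, S.Countable → T.Countable → (S ⊆ T ↔ SigmaEmbeddable (F S) (F T)) := by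
  obtain ⟨X, hX, hX_dim, hX_small⟩ := exists_isCompact_pairwise_smallOverlap hι
  choose! c hc hc_tendsto using fun (S : Set ι) (hS : S.Countable) =>
    have := hS.to_subtype
    exists_tendsto_cofinite_zero S
  refine ⟨fun S => shrinkingUnion (c S) fun i : S => X i,
    fun S hS => isCompact_shrinkingUnion (hc_tendsto S hS) fun i => hX i,
    fun S T hS hT => ⟨fun hST => ?_, fun h i hi => by_contra fun hiT => hX_dim i ?_⟩⟩
  · have := hS.to_subtype
    exact sigmaEmbeddable_shrinkingUnion (X := fun j : T => X j) (hc T hT) (hc S hS) (inclusion hST)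
  · have := hT.to_subtype
    have hsmall : SmallOverlap (X i) (shrinkingUnion (c T) fun j : T => X j) :=
      smallOverlap_shrinkingUnion (hc T hT) fun j => hX_small fun hij => hiT (hij ▸ j.2)
    obtain ⟨e, he⟩ := exists_isEmbedding_shrinkingUnion (X := fun j : S => X j) (hc S hS) ⟨i, hi⟩
    exact (hsmall.of_sigmaEmbeddable h).countableDimensional he

lemma countable_Iio_of_lt_omega1 {α : Ordinal} (hα : α < omega1) : (Iio α).Countable := by
  have hcard : α.card < Order.succ Cardinal.aleph0 := by
    rw [Cardinal.succ_aleph0]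
    exact Cardinal.lt_ord.mp hα
  rw [← Cardinal.le_aleph0_iff_set_countable, Cardinal.mk_Iio_ordinal, Cardinal.lift_le_aleph0]
  exact Order.lt_succ_iff.mp hcard

/-- The inclusion ordering of countable sets of countable ordinals embeds into the
σ-embeddability ordering of compact subsets of the Hilbert cube. -/
theorem stmt3 :
    ∃ F : Set Ordinal → Set (ℕ → unitInterval),
      (∀ S : Set Ordinal, S.Countable → (∀ o ∈ S, o < omega1) → IsCompact (F S)) ∧
      (∀ S T : Set Ordinal,
        S.Countable → (∀ o ∈ S, o < omega1) →
        T.Countable → (∀ o ∈ T, o < omega1) →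
        (S ⊆ T ↔ SigmaEmbeddable ↥(F S) ↥(F T))) := by
  obtain ⟨F, hF_compact, hF⟩ := exists_subset_iff_sigmaEmbeddable (ι := Iio omega1) fun i =>
    (countable_Iio_of_lt_omega1 i.2).preimage Subtype.val_injective
  have hcount {S : Set Ordinal} (hS : S.Countable) :
      (Subtype.val ⁻¹' S : Set (Iio omega1)).Countable := hS.preimage Subtype.val_injective
  refine ⟨fun S => F (Subtype.val ⁻¹' S), fun S hS _ => hF_compact _ (hcount hS),
    fun S T hS hS_lt hT _ => ?_⟩
  rw [← hF _ _ (hcount hS) (hcount hT), preimage_subset_preimage_iff (Subtype.range_val ▸ hS_lt)]
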